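/- Let n ≥ 1, 1 ≤ p₀ ≤ p₁ < ∞, 0 < s₀ ≤ s₁ < ∞, q ∈ [1,∞), and let 1 < σ₀ < σ₁ < ∞ satisfy 1/σ₀ − 1/σ₁ = 1 − (s₁ − s₀ + n/p₀ − n/p₁)/2, with 0 < s₁ − s₀ + n/p₀ − n/p₁ < 2. Then there is a constant C > 0 such that: for every T ∈ (0,1] and every map u : (0,T) × ℝⁿ → ℝ which is continuous in t and Schwartz class in x for each t, ( ∫₀^T ‖ ∫₀ᵗ e^{(t−s)Δ} u(s) ds ‖^{σ₁}_{B^{s₁}_{p₁,q}} dt )^{1/σ₁} ≤ C ( ∫₀^T ‖u(t)‖^{σ₀}_{B^{s₀}_{p₀,q}} dt )^{1/σ₀}. -/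

import Mathlib

open MeasureTheory Real Filter
open scoped ENNReal FourierTransform

noncomputable section

/-- `ℝⁿ` as a Euclidean space. -/
abbrev Rn (n : ℕ) : Type := EuclideanSpace ℝ (Fin n)

variable {n : ℕ}

/-- The Fourier transform of a real-valued Schwartz function, viewed as a ℂ-valued function. -/
def ftC (f : SchwartzMap (Rn n) ℝ) : Rn n → ℂ :=
  𝓕 (fun x => (f x : ℂ))

/-- `ψ₀` is a Littlewood–Paley function: an even, radial Schwartz function whose Fourier
transform is nonnegative, supported in the annulus `{ξ : 1/2 < ‖ξ‖ < 2}`, and satisfies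
`∑_{j ∈ ℤ} ψ̂₀(2^{-j} ξ) = 1` for `ξ ≠ 0`. -/
structure IsLPF (n : ℕ) (ψ₀ : SchwartzMap (Rn n) ℝ) : Prop where
  even : ∀ x : Rn n, ψ₀ (-x) = ψ₀ x
  radial : ∀ x y : Rn n, ‖x‖ = ‖y‖ → ψ₀ x = ψ₀ y
  ft_im : ∀ ξ : Rn n, (ftC ψ₀ ξ).im = 0
  ft_nonneg : ∀ ξ : Rn n, 0 ≤ (ftC ψ₀ ξ).re
  ft_supp : ∀ ξ : Rn n, ftC ψ₀ ξ ≠ 0 → 1/2 < ‖ξ‖ ∧ ‖ξ‖ < 2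
  ft_sum : ∀ ξ : Rn n, ξ ≠ 0 → HasSum (fun j : ℤ => ftC ψ₀ ((2:ℝ) ^ (-j) • ξ)) 1

/-- The Littlewood–Paley kernel `ψ_j(x) = 2^{jn} ψ₀(2^j x)`, whose Fourier transform is
`ψ̂₀(2^{-j} ξ)`. -/
def lpKernel (ψ₀ : SchwartzMap (Rn n) ℝ) (j : ℤ) (x : Rn n) : ℝ :=
  (2:ℝ) ^ (j * (n:ℤ)) * ψ₀ ((2:ℝ) ^ j • x)

/-- The Littlewood–Paley projection `Δ_j f = ψ_j ∗ f`. -/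
def lpProj (ψ₀ : SchwartzMap (Rn n) ℝ) (j : ℤ) (f : Rn n → ℝ) : Rn n → ℝ :=
  MeasureTheory.convolution (lpKernel ψ₀ j) f (ContinuousLinearMap.mul ℝ ℝ) volume

/-- `S_j f = ∑_{m ≤ j} Δ_m f`, the low-frequency cutoff; this is the L² function whose
Fourier transform is `(∑_{m ≤ j} ψ̂₀(2^{-m} ξ)) f̂(ξ)`. -/
def lowProj (ψ₀ : SchwartzMap (Rn n) ℝ) (j : ℤ) (f : Rn n → ℝ) (x : Rn n) : ℝ :=
  ∑' m : ℤ, if m ≤ j then lpProj ψ₀ m f x else 0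

/-- `Ψ` is the low-frequency piece of the Littlewood–Paley decomposition:
`Ψ̂ = 1 − ∑_{k ≥ 0} ψ̂_k`. -/
def IsLowPiece (ψ₀ Ψ : SchwartzMap (Rn n) ℝ) : Prop :=
  ∀ ξ : Rn n, ftC Ψ ξ = 1 - ∑' k : ℕ, ftC ψ₀ ((2:ℝ) ^ (-(k:ℤ)) • ξ)

/-- The inhomogeneous Besov norm `‖f‖_{B^s_{p,q}}`, valued in `[0,∞]`:
`‖Ψ∗f‖_{L^p} + (∑_{j ≥ 0} (2^{js} ‖Δ_j f‖_{L^p})^q)^{1/q}`, with the supremum over `j`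
replacing the `ℓ^q` sum when `q = ∞`. -/
def besovNorm (ψ₀ Ψ : SchwartzMap (Rn n) ℝ) (s : ℝ) (p q : ℝ≥0∞) (f : Rn n → ℝ) : ℝ≥0∞ :=
  eLpNorm (MeasureTheory.convolution (fun x => Ψ x) f (ContinuousLinearMap.mul ℝ ℝ) volume)
      p volume +
    (if q = ∞ then
      ⨆ j : ℕ, ENNReal.ofReal ((2:ℝ) ^ ((j:ℝ) * s)) * eLpNorm (lpProj ψ₀ (j:ℤ) f) p volume
    else
      (∑' j : ℕ, (ENNReal.ofReal ((2:ℝ) ^ ((j:ℝ) * s)) *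
        eLpNorm (lpProj ψ₀ (j:ℤ) f) p volume) ^ q.toReal) ^ (1 / q.toReal))

/-- The heat semigroup `e^{tΔ} f = h_t ∗ f` with `h_t(x) = (4πt)^{-n/2} e^{-‖x‖²/(4t)}`. -/
def heatOp (n : ℕ) (t : ℝ) (f : Rn n → ℝ) : Rn n → ℝ :=
  MeasureTheory.convolution
    (fun x : Rn n => (4 * π * t) ^ (-(n:ℝ)/2) * Real.exp (-‖x‖^2 / (4*t))) f
    (ContinuousLinearMap.mul ℝ ℝ) volume

/-- The partial derivative `∂_{x_i} f`. -/
def pderiv' (i : Fin n) (f : Rn n → ℝ) (x : Rn n) : ℝ :=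
  fderiv ℝ f x (EuclideanSpace.single i 1)

/-- The Laplacian `Δf = ∑ᵢ ∂²_{x_i} f`. -/
def lapl (f : Rn n → ℝ) (x : Rn n) : ℝ :=
  ∑ i : Fin n, pderiv' i (pderiv' i f) x

/-!
For `τ > 0` the heat semigroup gains `2θ = s₁ - s₀ + n/p₀ - n/p₁` derivatives at the price of a
factor `τ ^ (-θ)`: `‖e^{τΔ} f‖_{B^{s₁}_{p₁,q}} ≲ τ ^ (-θ) ‖f‖_{B^{s₀}_{p₀,q}}` for `τ ≤ T₀`. To see
this, write `Δ_j e^{τΔ} f = ψ̃_j ∗ (ψ̃_j ∗ h_τ) ∗ Δ_j f` with the fattened kernel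
`ψ̃ = ψ₋₁ + ψ₀ + ψ₁`. Young's inequality for the first factor gives the passage from `L^{p₀}` to
`L^{p₁}`. For the second, rescale to `j = 0`: since `ψ̃` is even with integral zero, only symmetric
second differences of `h_τ` enter, and `‖ψ̃ ∗ h_τ‖₁ ≲ min(1, τ⁻¹) ≤ τ ^ (-θ)`; the low-frequency
piece costs no negative power of `τ`, and `1 ≤ T₀ ^ θ * τ ^ (-θ)`. By Minkowski's inequality the
Besov norm of the Duhamel integral at time `t` is then at most a multiple of
`∫₀ᵗ (t - s) ^ (-θ) ‖u(s)‖_{B^{s₀}_{p₀,q}} ds`, and as `1/σ₀ - 1/σ₁ = 1 - θ`, this fractional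
integral maps `L^{σ₀}` to `L^{σ₁}` by the Hardy–Littlewood–Sobolev inequality.
-/

section Minkowski

variable {α β : Type*} [MeasurableSpace α] [MeasurableSpace β] {μ : Measure α} {ν : Measure β}

theorem lt_eLpNormEssSup_iff {ε : Type*} [ENorm ε] {f : β → ε} {a : ℝ≥0∞} :
    a < eLpNormEssSup f ν ↔ 0 < ν {y | a < ‖f y‖ₑ} := by
  have not_lt_iff : eLpNormEssSup f ν ≤ a ↔ ∀ᵐ y ∂ν, ‖f y‖ₑ ≤ a :=
    ⟨fun h => enorm_ae_le_eLpNormEssSup f ν |>.mono fun _ hy => hy.trans h, essSup_le_of_ae_le a⟩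
  simpa only [ae_iff, not_le, pos_iff_ne_zero] using not_lt_iff.not

theorem measurable_eLpNorm_of_uncurry {ε : Type*} [TopologicalSpace ε] [ContinuousENorm ε]
    [MeasurableSpace ε] [OpensMeasurableSpace ε] [SFinite ν] {F : α → β → ε}
    (hF : Measurable (Function.uncurry F)) (p : ℝ≥0∞) :
    Measurable fun x => eLpNorm (F x) p ν := by
  rcases eq_or_ne p 0 with rfl | hp0
  · simp only [eLpNorm_exponent_zero, measurable_const]
  rcases eq_or_ne p ∞ with rfl | hp
  · simp only [eLpNorm_exponent_top]
    refine measurable_of_Ioi fun a => ?_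
    have superlevel_eq : (fun x => eLpNormEssSup (F x) ν) ⁻¹' Set.Ioi a =
        {x | 0 < ν (Prod.mk x ⁻¹' {z | a < ‖Function.uncurry F z‖ₑ})} :=
      Set.ext fun x => lt_eLpNormEssSup_iff
    rw [superlevel_eq]
    exact measurableSet_lt measurable_const
      (measurable_measure_prodMk_left (measurableSet_lt measurable_const hF.enorm))
  · simp only [eLpNorm_eq_lintegral_rpow_enorm_toReal hp0 hp]
    exact (Measurable.lintegral_prod_right (hF.enorm.pow_const p.toReal)).pow_const _

theorem exists_measurable_le_lintegral_lt_top_of_lt [SigmaFinite ν] {f : β → ℝ≥0∞} {L : ℝ≥0∞}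
    (hL : L < ∫⁻ y, f y ∂ν) :
    ∃ g : β → ℝ≥0∞, Measurable g ∧ g ≤ f ∧ ∫⁻ y, g y ∂ν < ∞ ∧ L < ∫⁻ y, g y ∂ν := by
  rw [lintegral_eq_nnreal] at hL
  obtain ⟨φ, hL⟩ := lt_iSup_iff.1 hL
  obtain ⟨hφf, hLφ⟩ := lt_iSup_iff.1 hL
  rw [← SimpleFunc.lintegral_eq_lintegral] at hLφ
  obtain ⟨g, hgφ, hg_top, hLg⟩ :=
    SimpleFunc.exists_lt_lintegral_simpleFunc_of_lt_lintegral hLφ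
  exact ⟨fun y => g y, g.measurable.coe_nnreal_ennreal,
    fun y => (ENNReal.coe_le_coe.2 (hgφ y)).trans (hφf y), hg_top, hLg⟩

-- Bounding one factor of `H ^ p = H * H ^ (p - 1)` by the integral of `F` and applying Hölder's
-- inequality gives `X ≤ A * X ^ (1 - 1 / p)` for `X = ∫ H ^ p`; since `X` is finite, `X` cancels.
theorem lintegral_rpow_le_of_le_lintegral [SFinite μ] [SFinite ν] {F : α → β → ℝ≥0∞}
    (hF : Measurable (Function.uncurry F)) {p : ℝ} (hp : 1 < p) {H : β → ℝ≥0∞}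
    (hH : Measurable H) (hHF : ∀ y, H y ≤ ∫⁻ x, F x y ∂μ) (hfin : ∫⁻ y, H y ^ p ∂ν ≠ ∞) :
    (∫⁻ y, H y ^ p ∂ν) ^ (1 / p) ≤ ∫⁻ x, (∫⁻ y, F x y ^ p ∂ν) ^ (1 / p) ∂μ := by
  set X := ∫⁻ y, H y ^ p ∂ν
  set A := ∫⁻ x, (∫⁻ y, F x y ^ p ∂ν) ^ (1 / p) ∂μ
  have hpq : p.HolderConjugate (p / (p - 1)) := Real.HolderConjugate.conjExponent hp
  set q := p / (p - 1) with hq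
  have split_power (y : β) : H y ^ p = H y * H y ^ (p - 1) := by
    nth_rewrite 2 [← ENNReal.rpow_one (H y)]
    rw [← ENNReal.rpow_add_of_nonneg _ _ zero_le_one (sub_nonneg.2 hp.le), add_sub_cancel]
  have power_conj (y : β) : (H y ^ (p - 1)) ^ q = H y ^ p := by
    rw [← ENNReal.rpow_mul, hq, mul_div_cancel₀ _ (sub_ne_zero.2 hp.ne')]
  have holder (x : α) :
      ∫⁻ y, F x y * H y ^ (p - 1) ∂ν ≤ (∫⁻ y, F x y ^ p ∂ν) ^ (1 / p) * X ^ (1 / q) := by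
    have h := ENNReal.lintegral_mul_le_Lp_mul_Lq ν hpq (hF.of_uncurry_left (x := x)).aemeasurable
      (hH.pow_const (p - 1)).aemeasurable
    simpa only [Pi.mul_apply, power_conj] using h
  have self_bound : X ≤ A * X ^ (1 / q) := by
    calc X ≤ ∫⁻ y, ∫⁻ x, F x y * H y ^ (p - 1) ∂μ ∂ν := by
          refine lintegral_mono fun y => ?_
          rw [split_power, lintegral_mul_const _ hF.of_uncurry_right]
          exact mul_le_mul_left (hHF y) _
      _ = ∫⁻ x, ∫⁻ y, F x y * H y ^ (p - 1) ∂ν ∂μ :=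
          lintegral_lintegral_swap
            ((hF.comp measurable_swap).mul ((hH.comp measurable_fst).pow_const _)).aemeasurable
      _ ≤ ∫⁻ x, (∫⁻ y, F x y ^ p ∂ν) ^ (1 / p) * X ^ (1 / q) ∂μ := lintegral_mono holder
      _ = A * X ^ (1 / q) := lintegral_mul_const _
          ((Measurable.lintegral_prod_right (hF.pow_const p)).pow_const _)
  rcases eq_or_ne X 0 with hX | hX
  · rw [hX, ENNReal.zero_rpow_of_pos (one_div_pos.2 hpq.pos)]
    exact zero_le
  have hXq : X ^ (1 / q) ≠ 0 := by simp [ENNReal.rpow_eq_zero_iff, hX, hfin]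
  have hXq' : X ^ (1 / q) ≠ ∞ :=
    ENNReal.rpow_ne_top_of_nonneg (one_div_nonneg.2 hpq.symm.nonneg) hfin
  refine (ENNReal.mul_le_mul_iff_left hXq hXq').1 (le_trans (le_of_eq ?_) self_bound)
  rw [← ENNReal.rpow_add _ _ hX hfin, one_div, one_div, hpq.inv_add_inv_eq_one, ENNReal.rpow_one]

theorem lintegral_rpow_lintegral_le [SFinite μ] [SigmaFinite ν] {F : α → β → ℝ≥0∞}
    (hF : Measurable (Function.uncurry F)) {p : ℝ} (hp : 1 ≤ p) :
    (∫⁻ y, (∫⁻ x, F x y ∂μ) ^ p ∂ν) ^ (1 / p) ≤ ∫⁻ x, (∫⁻ y, F x y ^ p ∂ν) ^ (1 / p) ∂μ := by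
  rcases hp.eq_or_lt with rfl | hp
  · simp only [ENNReal.rpow_one, div_one]
    exact (lintegral_lintegral_swap (f := fun y x => F x y)
      (hF.comp measurable_swap).aemeasurable).le
  have hp0 : 0 < p := zero_lt_one.trans hp
  rw [one_div, ENNReal.rpow_inv_le_iff hp0]
  refine le_of_forall_lt fun L hL => ?_
  obtain ⟨g, hg, hgF, hg_top, hLg⟩ := exists_measurable_le_lintegral_lt_top_of_lt hL
  have root_power (y : β) : (g y ^ p⁻¹) ^ p = g y := ENNReal.rpow_inv_rpow hp0.ne' _
  have minkowski_root := lintegral_rpow_le_of_le_lintegral (ν := ν) hF hp (hg.pow_const p⁻¹)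
    (fun y => (ENNReal.rpow_inv_le_iff hp0).2 (hgF y)) (by simpa only [root_power] using hg_top.ne)
  simp only [root_power, one_div, ENNReal.rpow_inv_le_iff hp0] at minkowski_root ⊢
  exact hLg.trans_le minkowski_root

theorem eLpNorm_lintegral_le [SFinite μ] [SigmaFinite ν] {F : α → β → ℝ≥0∞}
    (hF : Measurable (Function.uncurry F)) {p : ℝ≥0∞} (hp : 1 ≤ p) :
    eLpNorm (fun y => ∫⁻ x, F x y ∂μ) p ν ≤ ∫⁻ x, eLpNorm (F x) p ν ∂μ := by
  rcases eq_or_ne p ∞ with rfl | hp_top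
  · simp only [eLpNorm_exponent_top]
    have ae_le : ∀ᵐ y ∂ν, ∀ᵐ x ∂μ, F x y ≤ eLpNormEssSup (F x) ν := by
      have norm_measurable : Measurable fun x => eLpNormEssSup (F x) ν := by
        simpa only [eLpNorm_exponent_top] using measurable_eLpNorm_of_uncurry (ν := ν) hF ∞
      exact (Measure.ae_ae_comm (p := fun x y => F x y ≤ eLpNormEssSup (F x) ν)
        (measurableSet_le hF (norm_measurable.comp measurable_fst))).1 <|
          ae_of_all μ fun x => ae_le_essSup (f := F x)
    exact essSup_le_of_ae_le _ (ae_le.mono fun y hy => lintegral_mono_ae hy)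
  · have hp0 : p ≠ 0 := (zero_lt_one.trans_le hp).ne'
    simp only [eLpNorm_eq_lintegral_rpow_enorm_toReal hp0 hp_top, enorm_eq_self]
    exact lintegral_rpow_lintegral_le hF (ENNReal.toReal_one ▸ ENNReal.toReal_mono hp_top hp)

theorem eLpNorm_integral_le {G : Type*} [NormedAddCommGroup G] [NormedSpace ℝ G]
    [MeasurableSpace G] [OpensMeasurableSpace G] [SFinite μ] [SigmaFinite ν] {f : α → β → G}
    (hf : Measurable (Function.uncurry f)) {p : ℝ≥0∞} (hp : 1 ≤ p) :
    eLpNorm (fun y => ∫ x, f x y ∂μ) p ν ≤ ∫⁻ x, eLpNorm (f x) p ν ∂μ := by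
  calc eLpNorm (fun y => ∫ x, f x y ∂μ) p ν ≤ eLpNorm (fun y => ∫⁻ x, ‖f x y‖ₑ ∂μ) p ν :=
        eLpNorm_mono_enorm fun y => enorm_integral_le_lintegral_enorm fun x => f x y
    _ ≤ ∫⁻ x, eLpNorm (f x) p ν ∂μ := eLpNorm_lintegral_le hf.enorm hp

end Minkowski

section WeakToStrong

theorem lintegral_Ioo_rpow_sub_one {m X : ℝ} (hm : 0 < m) (hX : 0 ≤ X) :
    ∫⁻ l in Set.Ioo 0 X, ENNReal.ofReal (l ^ (m - 1)) = ENNReal.ofReal (X ^ m / m) := by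
  have integrable : IntegrableOn (fun l : ℝ => l ^ (m - 1)) (Set.Ioo 0 X) :=
    (intervalIntegrable_iff_integrableOn_Ioo_of_le hX).1
      (intervalIntegral.intervalIntegrable_rpow' (by linarith))
  have integral_eq := integral_rpow (a := 0) (b := X) (r := m - 1) (Or.inl (by linarith))
  rw [intervalIntegral.integral_of_le hX, integral_Ioc_eq_integral_Ioo, sub_add_cancel,
    Real.zero_rpow hm.ne', sub_zero] at integral_eq
  rw [← ofReal_integral_eq_lintegral_ofReal integrable, integral_eq]
  exact ae_restrict_of_forall_mem measurableSet_Ioo fun l hl => Real.rpow_nonneg hl.1.le _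

theorem lintegral_Ioi_rpow_neg {e R : ℝ} (he : 1 < e) (hR : 0 < R) :
    ∫⁻ l in Set.Ioi R, ENNReal.ofReal (l ^ (-e)) = ENNReal.ofReal (R ^ (1 - e) / (e - 1)) := by
  have integral_eq := integral_Ioi_rpow_of_lt (a := -e) (by linarith) hR
  rw [← ofReal_integral_eq_lintegral_ofReal (integrableOn_Ioi_rpow_of_lt (by linarith) hR),
    integral_eq, ← neg_div_neg_eq, neg_neg, neg_add_eq_sub, neg_sub]
  exact ae_restrict_of_forall_mem measurableSet_Ioi fun l hl =>
    Real.rpow_nonneg (hR.trans hl).le _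

theorem rpow_le_lintegral_of_lt {m : ℝ} (hm : 0 < m) (F : ℝ≥0∞) :
    F ^ m ≤ ∫⁻ l in Set.Ioi 0,
      if ENNReal.ofReal l < F then ENNReal.ofReal (m * l ^ (m - 1)) else 0 := by
  refine ENNReal.le_of_forall_nnreal_lt fun r hr => ?_
  obtain ⟨ρ, hρ, hρr⟩ : ∃ ρ : ℝ, 0 ≤ ρ ∧ ρ ^ m = r :=
    ⟨(r : ℝ) ^ m⁻¹, Real.rpow_nonneg r.2 _, Real.rpow_inv_rpow r.2 hm.ne'⟩
  have hρF : ENNReal.ofReal ρ ≤ F := by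
    rw [← ENNReal.rpow_le_rpow_iff hm, ENNReal.ofReal_rpow_of_nonneg hρ hm.le, hρr,
      ENNReal.ofReal_coe_nnreal]
    exact hr.le
  calc (r : ℝ≥0∞) = ENNReal.ofReal m * ENNReal.ofReal (ρ ^ m / m) := by
        rw [← ENNReal.ofReal_mul hm.le, mul_div_cancel₀ _ hm.ne', hρr, ENNReal.ofReal_coe_nnreal]
    _ = ∫⁻ l in Set.Ioo 0 ρ, ENNReal.ofReal (m * l ^ (m - 1)) := by
        simp_rw [ENNReal.ofReal_mul hm.le]
        rw [lintegral_const_mul' _ _ ENNReal.ofReal_ne_top,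
          lintegral_Ioo_rpow_sub_one hm hρ]
    _ ≤ ∫⁻ l in Set.Ioo 0 ρ,
          if ENNReal.ofReal l < F then ENNReal.ofReal (m * l ^ (m - 1)) else 0 := by
        refine setLIntegral_mono' measurableSet_Ioo fun l hl => ?_
        rw [if_pos (((ENNReal.ofReal_lt_ofReal_iff (hl.1.trans hl.2)).2 hl.2).trans_le hρF)]
    _ ≤ _ := lintegral_mono_set fun l hl => hl.1

theorem lintegral_rpow_le_lintegral_meas_lt {α : Type*} [MeasurableSpace α] {μ : Measure α}
    [SFinite μ] {G : α → ℝ≥0∞} (hG : Measurable G) {m : ℝ} (hm : 0 < m) :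
    ∫⁻ x, G x ^ m ∂μ ≤
      ∫⁻ l in Set.Ioi 0, ENNReal.ofReal (m * l ^ (m - 1)) * μ {x | ENNReal.ofReal l < G x} := by
  refine (lintegral_mono fun x => rpow_le_lintegral_of_lt hm (G x)).trans (le_of_eq ?_)
  rw [lintegral_lintegral_swap]
  · refine lintegral_congr fun l => ?_
    rw [← lintegral_indicator_const (measurableSet_lt measurable_const hG)]
    simp only [Set.indicator_apply, Set.mem_ofPred_eq]
  · exact (Measurable.ite (measurableSet_lt (by fun_prop) (by fun_prop)) (by fun_prop)
      measurable_const).aemeasurable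

/-- The constant by which weak type superlevel bounds at height `d * l ^ b` imply a strong type
`m` bound, see `lintegral_rpow_le_of_meas_lt_le`. -/
def weakToStrongConst (m b d : ℝ) : ℝ := m / d * (d⁻¹ ^ (m / b - 1) / (m - b))

variable {m b d : ℝ}

theorem weakToStrongConst_pos (hb : 0 < b) (hbm : b < m) (hd : 0 < d) :
    0 < weakToStrongConst m b d := by
  have : 0 < m - b := sub_pos.2 hbm
  have : 0 < m := hb.trans hbm
  unfold weakToStrongConst
  positivity

theorem lintegral_rpow_mul_ite_le (hb : 0 < b) (hbm : b < m) (hd : 0 < d) (F : ℝ≥0∞) :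
    ∫⁻ l in Set.Ioi 0, ENNReal.ofReal (m / d * l ^ (m - b - 1)) *
        (if ENNReal.ofReal (d * l ^ b) < F then F else 0) ≤
      ENNReal.ofReal (weakToStrongConst m b d) * F ^ (m / b) := by
  have hm : 0 < m := hb.trans hbm
  rcases eq_or_ne F ∞ with rfl | hF
  · rw [ENNReal.top_rpow_of_pos (div_pos hm hb), ENNReal.mul_top]
    · exact le_top
    · simpa using weakToStrongConst_pos hb hbm hd
  lift F to NNReal using hF
  obtain ⟨r, hr, hrF⟩ : ∃ r : ℝ, 0 ≤ r ∧ ENNReal.ofReal r = F :=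
    ⟨F, F.2, ENNReal.ofReal_coe_nnreal⟩
  rw [← hrF]
  have support_le (l : ℝ) (hl : l ∈ Set.Ioi 0) : ENNReal.ofReal (m / d * l ^ (m - b - 1)) *
        (if ENNReal.ofReal (d * l ^ b) < ENNReal.ofReal r then ENNReal.ofReal r else 0) ≤
      (Set.Ioo 0 ((r / d) ^ b⁻¹)).indicator
        (fun l => ENNReal.ofReal (m / d * r) * ENNReal.ofReal (l ^ (m - b - 1))) l := by
    have hl0 : (0 : ℝ) < l := hl
    split_ifs with h
    · have hlr : l < (r / d) ^ b⁻¹ := by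
        rw [Real.lt_rpow_inv_iff_of_pos hl0.le (by positivity) hb, lt_div_iff₀' hd]
        exact (ENNReal.ofReal_lt_ofReal_iff'.1 h).1
      rw [Set.indicator_of_mem (Set.mem_Ioo.2 ⟨hl0, hlr⟩), ← ENNReal.ofReal_mul (by positivity),
        ← ENNReal.ofReal_mul (by positivity), mul_right_comm]
    · simp only [mul_zero, zero_le]
  refine (setLIntegral_mono' measurableSet_Ioi support_le).trans ?_
  refine (lintegral_mono' Measure.restrict_le_self le_rfl).trans (le_of_eq ?_)
  rw [lintegral_indicator measurableSet_Ioo, lintegral_const_mul' _ _ ENNReal.ofReal_ne_top,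
    lintegral_Ioo_rpow_sub_one (sub_pos.2 hbm) (by positivity), ← ENNReal.ofReal_mul
    (by positivity), ENNReal.ofReal_rpow_of_nonneg hr (by positivity),
    ← ENNReal.ofReal_mul (weakToStrongConst_pos hb hbm hd).le, ← Real.rpow_mul (by positivity),
    show b⁻¹ * (m - b) = m / b - 1 by field_simp, div_eq_mul_inv r d,
    Real.mul_rpow hr (by positivity), weakToStrongConst]
  congr 1
  rcases hr.eq_or_lt with h | h
  · simp only [← h, mul_zero, zero_mul, Real.zero_rpow (div_pos hm hb).ne']
  · rw [Real.rpow_sub_one h.ne']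
    field_simp

theorem lintegral_rpow_le_of_meas_lt_le {α β : Type*} [MeasurableSpace α] [MeasurableSpace β]
    {μ : Measure α} {ν : Measure β} [SFinite μ] [SFinite ν] {G : α → ℝ≥0∞} {f : β → ℝ≥0∞}
    (hG : Measurable G) (hf : Measurable f) (hb : 0 < b) (hbm : b < m) (hd : 0 < d)
    (hGf : ∀ l : ℝ, 0 < l → μ {t | ENNReal.ofReal l < G t} ≤
      (ENNReal.ofReal (d * l ^ b))⁻¹ * ∫⁻ s in {s | ENNReal.ofReal (d * l ^ b) < f s}, f s ∂ν) :
    ∫⁻ t, G t ^ m ∂μ ≤ ENNReal.ofReal (weakToStrongConst m b d) * ∫⁻ s, f s ^ (m / b) ∂ν := by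
  have hm : 0 < m := hb.trans hbm
  have truncation_measurable : Measurable fun z : ℝ × β =>
      if ENNReal.ofReal (d * z.1 ^ b) < f z.2 then f z.2 else 0 :=
    Measurable.ite (measurableSet_lt (by fun_prop) (by fun_prop)) (by fun_prop) measurable_const
  calc ∫⁻ t, G t ^ m ∂μ
    _ ≤ ∫⁻ l in Set.Ioi 0, ENNReal.ofReal (m * l ^ (m - 1)) * μ {t | ENNReal.ofReal l < G t} :=
        lintegral_rpow_le_lintegral_meas_lt hG hm
    _ ≤ ∫⁻ l in Set.Ioi 0, ∫⁻ s, ENNReal.ofReal (m / d * l ^ (m - b - 1)) *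
          (if ENNReal.ofReal (d * l ^ b) < f s then f s else 0) ∂ν := by
        refine setLIntegral_mono' measurableSet_Ioi fun l hl => ?_
        have hl0 : (0 : ℝ) < l := hl
        refine (mul_le_mul_right (hGf l hl0) _).trans (le_of_eq ?_)
        rw [lintegral_const_mul' _ _ ENNReal.ofReal_ne_top, ← mul_assoc,
          ← ENNReal.ofReal_inv_of_pos (by positivity), ← ENNReal.ofReal_mul (by positivity),
          ← lintegral_indicator (measurableSet_lt measurable_const hf),
          show m - b - 1 = m - 1 - b by ring, Real.rpow_sub hl0 (m - 1) b]
        simp only [Set.indicator_apply, Set.mem_ofPred_eq]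
        congr 2
        field_simp
    _ = ∫⁻ s, (∫⁻ l in Set.Ioi 0, ENNReal.ofReal (m / d * l ^ (m - b - 1)) *
          (if ENNReal.ofReal (d * l ^ b) < f s then f s else 0)) ∂ν :=
        lintegral_lintegral_swap (Measurable.mul (by fun_prop) truncation_measurable).aemeasurable
    _ ≤ ∫⁻ s, ENNReal.ofReal (weakToStrongConst m b d) * f s ^ (m / b) ∂ν :=
        lintegral_mono fun s => lintegral_rpow_mul_ite_le hb hbm hd (f s)
    _ = ENNReal.ofReal (weakToStrongConst m b d) * ∫⁻ s, f s ^ (m / b) ∂ν :=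
        lintegral_const_mul' _ _ ENNReal.ofReal_ne_top

end WeakToStrong

section HardyLittlewoodSobolev

section Group

variable {G : Type*} [AddCommGroup G] [MeasurableSpace G] [MeasurableAdd₂ G] [MeasurableNeg G]
  {μ : Measure G} [μ.IsAddLeftInvariant] [μ.IsNegInvariant] {K K₁ K₂ f : G → ℝ≥0∞}

theorem lintegral_sub_mul_le_Lp_mul_Lq {p q : ℝ} (hpq : p.HolderConjugate q) (hK : Measurable K)
    (hf : Measurable f) (t : G) :
    ∫⁻ s, K (t - s) * f s ∂μ ≤
      (∫⁻ s, K s ^ p ∂μ) ^ (1 / p) * (∫⁻ s, f s ^ q ∂μ) ^ (1 / q) := by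
  rw [← lintegral_sub_left_eq_self (fun s => K s ^ p) t]
  exact ENNReal.lintegral_mul_le_Lp_mul_Lq μ hpq
    (hK.comp (measurable_const.sub measurable_id)).aemeasurable hf.aemeasurable

theorem lintegral_sub_mul_le_truncation (hK : Measurable K) (a : ℝ≥0∞) (t : G) :
    ∫⁻ s, K (t - s) * f s ∂μ ≤
      (∫⁻ s, K (t - s) * {s | a < f s}.indicator f s ∂μ) + a * ∫⁻ s, K s ∂μ := by
  have hK_sub : Measurable fun s => K (t - s) := hK.comp (measurable_const.sub measurable_id)
  calc ∫⁻ s, K (t - s) * f s ∂μ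
    _ ≤ ∫⁻ s, (K (t - s) * {s | a < f s}.indicator f s + a * K (t - s)) ∂μ := by
        refine lintegral_mono fun s => ?_
        rw [mul_comm a, ← mul_add]
        refine mul_le_mul_right ?_ _
        by_cases h : a < f s
        · rw [Set.indicator_of_mem (s := {s | a < f s}) h]
          exact le_self_add
        · exact (not_lt.1 h).trans le_add_self
    _ = _ := by
        rw [lintegral_add_right _ (hK_sub.const_mul a), lintegral_const_mul _ hK_sub,
          lintegral_sub_left_eq_self K t]

theorem meas_lt_lintegral_sub_mul_le [SFinite μ] (hK₁ : Measurable K₁)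
    (hf : Measurable f) {a l : ℝ≥0∞} (hl : l ≠ 0) (hl' : l ≠ ∞)
    (near : a * ∫⁻ s, K₁ s ∂μ = l) (far : ∀ t, ∫⁻ s, K₂ (t - s) * f s ∂μ ≤ l) :
    μ {t | 3 * l < ∫⁻ s, (K₁ (t - s) + K₂ (t - s)) * f s ∂μ} ≤
      a⁻¹ * ∫⁻ s in {s | a < f s}, f s ∂μ := by
  set g : G → ℝ≥0∞ := {s | a < f s}.indicator f
  have hg : Measurable g := hf.indicator (measurableSet_lt measurable_const hf)
  have hK₁g : Measurable fun z : G × G => K₁ (z.1 - z.2) * g z.2 :=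
    (hK₁.comp measurable_sub).mul (hg.comp measurable_snd)
  have superlevel_subset : {t | 3 * l < ∫⁻ s, (K₁ (t - s) + K₂ (t - s)) * f s ∂μ} ⊆
      {t | l ≤ ∫⁻ s, K₁ (t - s) * g s ∂μ} := by
    intro t ht
    rw [Set.mem_ofPred_eq] at ht
    refine le_of_not_gt fun (hlt : ∫⁻ s, K₁ (t - s) * g s ∂μ < l) => ht.not_ge ?_
    have hK₁f : Measurable fun s => K₁ (t - s) * f s :=
      (hK₁.comp (measurable_const.sub measurable_id)).mul hf
    calc ∫⁻ s, (K₁ (t - s) + K₂ (t - s)) * f s ∂μ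
      _ = (∫⁻ s, K₁ (t - s) * f s ∂μ) + ∫⁻ s, K₂ (t - s) * f s ∂μ := by
          simp_rw [add_mul]
          exact lintegral_add_left hK₁f _
      _ ≤ (l + l) + l :=
          add_le_add ((lintegral_sub_mul_le_truncation hK₁ a t).trans
            (add_le_add hlt.le near.le)) (far t)
      _ = 3 * l := by ring
  have norm_ne_zero : ∫⁻ s, K₁ s ∂μ ≠ 0 := fun h => hl (by rw [← near, h, mul_zero])
  have a_ne_zero : a ≠ 0 := fun h => hl (by rw [← near, h, zero_mul])
  have norm_ne_top : ∫⁻ s, K₁ s ∂μ ≠ ∞ := fun h =>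
    hl' (by rw [← near, h, ENNReal.mul_top a_ne_zero])
  calc μ {t | 3 * l < ∫⁻ s, (K₁ (t - s) + K₂ (t - s)) * f s ∂μ}
    _ ≤ μ {t | l ≤ ∫⁻ s, K₁ (t - s) * g s ∂μ} := measure_mono superlevel_subset
    _ ≤ (∫⁻ t, ∫⁻ s, K₁ (t - s) * g s ∂μ ∂μ) / l :=
        meas_ge_le_lintegral_div (Measurable.lintegral_prod_right hK₁g).aemeasurable hl hl'
    _ = (∫⁻ s, ∫⁻ t, K₁ (t - s) * g s ∂μ ∂μ) / l := by
        rw [lintegral_lintegral_swap hK₁g.aemeasurable]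
    _ = ((∫⁻ s, K₁ s ∂μ) * ∫⁻ s, g s ∂μ) / l := by
        rw [← lintegral_const_mul _ hg]
        congr 1
        refine lintegral_congr fun s => ?_
        have hK₁_sub : Measurable fun t => K₁ (t - s) := hK₁.comp (measurable_id.sub_const s)
        rw [lintegral_mul_const _ hK₁_sub, lintegral_sub_right_eq_self K₁ s]
    _ = a⁻¹ * ∫⁻ s in {s | a < f s}, f s ∂μ := by
        rw [← lintegral_indicator (measurableSet_lt measurable_const hf), ← near, mul_comm a,
          ENNReal.mul_div_mul_left _ _ norm_ne_zero norm_ne_top, div_eq_mul_inv, mul_comm]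

end Group

/-- The one-sided Riesz kernel `r ↦ r ^ (-θ)` on `(0, ∞)`, extended by zero, whose convolution
operator is, up to a constant, the Riemann–Liouville fractional integral of order `1 - θ`. -/
def rlKernel (θ : ℝ) : ℝ → ℝ≥0∞ :=
  (Set.Ioi 0).indicator fun r => ENNReal.ofReal (r ^ (-θ))

variable {θ : ℝ}

@[fun_prop]
theorem measurable_rlKernel : Measurable (rlKernel θ) :=
  Measurable.indicator (by fun_prop) measurableSet_Ioi

theorem setLIntegral_Iio_rlKernel (hθ : θ < 1) {R : ℝ} (hR : 0 ≤ R) :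
    ∫⁻ r in Set.Iio R, rlKernel θ r = ENNReal.ofReal (R ^ (1 - θ) / (1 - θ)) := by
  rw [← lintegral_Ioo_rpow_sub_one (sub_pos.2 hθ) hR, rlKernel,
    setLIntegral_indicator measurableSet_Ioi, Set.Ioi_inter_Iio]
  simp only [sub_sub_cancel_left]

theorem setLIntegral_Ici_rlKernel_rpow {q R : ℝ} (hq : 0 < q) (hθq : 1 < θ * q) (hR : 0 < R) :
    ∫⁻ r in Set.Ici R, rlKernel θ r ^ q = ENNReal.ofReal (R ^ (1 - θ * q) / (θ * q - 1)) := by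
  rw [← lintegral_Ioi_rpow_neg hθq hR, ← setLIntegral_congr Ioi_ae_eq_Ici]
  refine setLIntegral_congr_fun measurableSet_Ioi fun r hr => ?_
  have hr0 : 0 < r := hR.trans hr
  simp only [rlKernel, Set.indicator_of_mem (Set.mem_Ioi.2 hr0)]
  rw [ENNReal.ofReal_rpow_of_nonneg (by positivity) hq.le, ← Real.rpow_mul hr0.le, neg_mul]

variable {σ₀ σ₁ : ℝ}

theorem lintegral_Ici_rlKernel_sub_mul_le (hσ₀ : 1 < σ₀) (hσ₁ : 0 < σ₁)
    (hθ : 1 / σ₀ - 1 / σ₁ = 1 - θ) :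
    ∃ c : ℝ, 0 < c ∧ ∀ f : ℝ → ℝ≥0∞, Measurable f → ∫⁻ s, f s ^ σ₀ ≤ 1 → ∀ R : ℝ, 0 < R → ∀ t,
      ∫⁻ s, (Set.Ici R).indicator (rlKernel θ) (t - s) * f s ≤
        ENNReal.ofReal (c * R ^ (-(1 / σ₁))) := by
  obtain ⟨q, hq⟩ : ∃ q, Real.HolderConjugate q σ₀ :=
    ⟨_, (Real.HolderConjugate.conjExponent hσ₀).symm⟩
  have inv_q : 1 / q = θ - 1 / σ₁ := by
    have := hq.inv_add_inv_eq_one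
    simp only [one_div] at hθ ⊢
    linarith
  have hθq : 1 < θ * q := by
    have : 1 / q < θ := by rw [inv_q]; linarith [one_div_pos.2 hσ₁]
    rwa [div_lt_iff₀ hq.pos] at this
  have hθq' : 0 < θ * q - 1 := sub_pos.2 hθq
  refine ⟨((θ * q - 1) ^ (1 / q))⁻¹, by positivity, fun f hf hf1 R hR t => ?_⟩
  have tail_power (r : ℝ) : (Set.Ici R).indicator (rlKernel θ) r ^ q =
      (Set.Ici R).indicator (fun r => rlKernel θ r ^ q) r := by
    by_cases hr : r ∈ Set.Ici R
    · simp only [Set.indicator_of_mem hr]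
    · simp only [Set.indicator_of_notMem hr, ENNReal.zero_rpow_of_pos hq.pos]
  calc ∫⁻ s, (Set.Ici R).indicator (rlKernel θ) (t - s) * f s
    _ ≤ (∫⁻ r, (Set.Ici R).indicator (rlKernel θ) r ^ q) ^ (1 / q) *
          (∫⁻ s, f s ^ σ₀) ^ (1 / σ₀) :=
        lintegral_sub_mul_le_Lp_mul_Lq hq (measurable_rlKernel.indicator measurableSet_Ici) hf t
    _ ≤ ENNReal.ofReal (R ^ (1 - θ * q) / (θ * q - 1)) ^ (1 / q) * 1 ^ (1 / σ₀) := by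
        simp only [tail_power, lintegral_indicator measurableSet_Ici,
          setLIntegral_Ici_rlKernel_rpow hq.pos hθq hR]
        gcongr
    _ = ENNReal.ofReal (((θ * q - 1) ^ (1 / q))⁻¹ * R ^ (-(1 / σ₁))) := by
        rw [ENNReal.one_rpow, mul_one, ENNReal.ofReal_rpow_of_nonneg (by positivity)
          (one_div_nonneg.2 hq.nonneg), Real.div_rpow (by positivity) hθq'.le,
          ← Real.rpow_mul hR.le, div_eq_inv_mul]
        congr 3
        rw [sub_mul, mul_assoc, mul_one_div_cancel hq.ne_zero, inv_q]
        ring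

theorem exists_meas_lt_lintegral_rlKernel_le (hσ₀ : 1 < σ₀) (hσ₀₁ : σ₀ < σ₁)
    (hθ : 1 / σ₀ - 1 / σ₁ = 1 - θ) :
    ∃ d : ℝ, 0 < d ∧ ∀ f : ℝ → ℝ≥0∞, Measurable f → ∫⁻ s, f s ^ σ₀ ≤ 1 → ∀ l : ℝ, 0 < l →
      volume {t | ENNReal.ofReal l < ∫⁻ s, rlKernel θ (t - s) * f s} ≤
        (ENNReal.ofReal (d * l ^ (σ₁ / σ₀)))⁻¹ *
          ∫⁻ s in {s | ENNReal.ofReal (d * l ^ (σ₁ / σ₀)) < f s}, f s := by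
  have hσ₀0 : 0 < σ₀ := zero_lt_one.trans hσ₀
  have hσ₁0 : 0 < σ₁ := hσ₀0.trans hσ₀₁
  have hθ1 : 0 < 1 - θ := hθ ▸ sub_pos.2 (one_div_lt_one_div_of_lt hσ₀0 hσ₀₁)
  obtain ⟨c, hc, far⟩ := lintegral_Ici_rlKernel_sub_mul_le hσ₀ hσ₁0 hθ
  refine ⟨(1 - θ) / 3 * ((3 * c) ^ (σ₁ * (1 - θ)))⁻¹, by positivity, fun f hf hf1 l hl => ?_⟩
  -- At this radius the far part of the kernel contributes at most a third of the level `l`.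
  set R := (l / (3 * c)) ^ (-σ₁) with hR
  have hR0 : 0 < R := by positivity
  set a := (1 - θ) / 3 * ((3 * c) ^ (σ₁ * (1 - θ)))⁻¹ * l ^ (σ₁ / σ₀) with ha
  have ha0 : 0 < a := by positivity
  have far_radius : c * R ^ (-(1 / σ₁)) = l / 3 := by
    rw [hR, ← Real.rpow_mul (by positivity), neg_mul_neg, mul_one_div_cancel hσ₁0.ne',
      Real.rpow_one]
    field_simp
  have near_radius : a * (R ^ (1 - θ) / (1 - θ)) = l / 3 := by
    have exponent : σ₁ / σ₀ = 1 + σ₁ * (1 - θ) := by rw [← hθ]; field_simp; ring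
    rw [ha, hR, ← Real.rpow_mul (by positivity), exponent, Real.rpow_add hl, Real.rpow_one,
      neg_mul, Real.rpow_neg (by positivity), Real.div_rpow hl.le (by positivity)]
    field_simp
  have split_kernel (r : ℝ) : rlKernel θ r =
      (Set.Iio R).indicator (rlKernel θ) r + (Set.Ici R).indicator (rlKernel θ) r := by
    rw [← Set.compl_Iio, Set.indicator_self_add_compl_apply]
  have level_third : ENNReal.ofReal l = 3 * ENNReal.ofReal (l / 3) := by
    rw [← ENNReal.ofReal_ofNat 3, ← ENNReal.ofReal_mul (by positivity),
      mul_div_cancel₀ _ three_ne_zero]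
  simp only [split_kernel, level_third]
  refine meas_lt_lintegral_sub_mul_le (measurable_rlKernel.indicator measurableSet_Iio)
    hf (by simpa using hl) ENNReal.ofReal_ne_top ?_
    fun t => (far f hf hf1 R hR0 t).trans_eq (by rw [far_radius])
  rw [lintegral_indicator measurableSet_Iio, setLIntegral_Iio_rlKernel (sub_pos.1 hθ1) hR0.le,
    ← ENNReal.ofReal_mul ha0.le, near_radius]

theorem exists_lintegral_rlKernel_rpow_le_of_le_one (hσ₀ : 1 < σ₀) (hσ₀₁ : σ₀ < σ₁)
    (hθ : 1 / σ₀ - 1 / σ₁ = 1 - θ) :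
    ∃ C : ℝ, 0 < C ∧ ∀ f : ℝ → ℝ≥0∞, Measurable f → ∫⁻ s, f s ^ σ₀ ≤ 1 →
      ∫⁻ t, (∫⁻ s, rlKernel θ (t - s) * f s) ^ σ₁ ≤ ENNReal.ofReal C := by
  have hσ₀0 : 0 < σ₀ := zero_lt_one.trans hσ₀
  have hσ₁0 : 0 < σ₁ := hσ₀0.trans hσ₀₁
  have hb : 0 < σ₁ / σ₀ := div_pos hσ₁0 hσ₀0
  have hbσ₁ : σ₁ / σ₀ < σ₁ := div_lt_self hσ₁0 hσ₀
  obtain ⟨d, hd, superlevel⟩ := exists_meas_lt_lintegral_rlKernel_le hσ₀ hσ₀₁ hθ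
  refine ⟨_, weakToStrongConst_pos hb hbσ₁ hd, fun f hf hf1 => ?_⟩
  have potential_measurable : Measurable fun t => ∫⁻ s, rlKernel θ (t - s) * f s :=
    Measurable.lintegral_prod_right (f := fun t s => rlKernel θ (t - s) * f s) (by fun_prop)
  refine (lintegral_rpow_le_of_meas_lt_le potential_measurable hf hb hbσ₁ hd
    (superlevel f hf hf1)).trans ?_
  rw [div_div_cancel₀ hσ₁0.ne']
  exact mul_le_of_le_one_right' hf1

theorem hardy_littlewood_sobolev (hσ₀ : 1 < σ₀) (hσ₀₁ : σ₀ < σ₁)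
    (hθ : 1 / σ₀ - 1 / σ₁ = 1 - θ) :
    ∃ C : ℝ, 0 < C ∧ ∀ f : ℝ → ℝ≥0∞, Measurable f →
      (∫⁻ t, (∫⁻ s, rlKernel θ (t - s) * f s) ^ σ₁) ^ (1 / σ₁) ≤
        ENNReal.ofReal C * (∫⁻ s, f s ^ σ₀) ^ (1 / σ₀) := by
  obtain ⟨C, hC, normalized⟩ := exists_lintegral_rlKernel_rpow_le_of_le_one hσ₀ hσ₀₁ hθ
  have hσ₀0 : 0 < σ₀ := zero_lt_one.trans hσ₀
  have hσ₁0 : 0 < σ₁ := hσ₀0.trans hσ₀₁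
  refine ⟨C ^ (1 / σ₁), by positivity, fun f hf => ?_⟩
  set N := (∫⁻ s, f s ^ σ₀) ^ (1 / σ₀) with hN
  have N_rpow : ∫⁻ s, f s ^ σ₀ = N ^ σ₀ := by
    rw [hN, one_div, ENNReal.rpow_inv_rpow hσ₀0.ne']
  rcases eq_or_ne N ∞ with hN_top | hN_top
  · rw [hN_top, ENNReal.mul_top (ENNReal.ofReal_pos.2 (by positivity)).ne']
    exact le_top
  rcases eq_or_ne N 0 with hN0 | hN0
  · rw [hN0, ENNReal.zero_rpow_of_pos hσ₀0, lintegral_eq_zero_iff (hf.pow_const _)] at N_rpow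
    have potential_zero (t : ℝ) : ∫⁻ s, rlKernel θ (t - s) * f s = 0 :=
      (lintegral_congr_ae <| N_rpow.mono fun s hs => by
        rw [(ENNReal.rpow_eq_zero_iff_of_pos hσ₀0).1 hs, mul_zero]).trans lintegral_zero
    simp only [potential_zero, ENNReal.zero_rpow_of_pos hσ₁0, lintegral_zero,
      ENNReal.zero_rpow_of_pos (one_div_pos.2 hσ₁0), zero_le]
  have normalized_f := normalized (fun s => N⁻¹ * f s) (hf.const_mul _) <| by
    simp_rw [ENNReal.mul_rpow_of_nonneg _ _ hσ₀0.le]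
    rw [lintegral_const_mul _ (hf.pow_const _), N_rpow,
      ← ENNReal.mul_rpow_of_nonneg _ _ hσ₀0.le, ENNReal.inv_mul_cancel hN0 hN_top,
      ENNReal.one_rpow]
  have rescale (t : ℝ) : ∫⁻ s, rlKernel θ (t - s) * f s =
      N * ∫⁻ s, rlKernel θ (t - s) * (N⁻¹ * f s) := by
    rw [← lintegral_const_mul' _ _ hN_top]
    refine lintegral_congr fun s => ?_
    rw [mul_left_comm, ← mul_assoc N, ENNReal.mul_inv_cancel hN0 hN_top, one_mul]
  simp_rw [rescale, ENNReal.mul_rpow_of_nonneg _ _ hσ₁0.le]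
  rw [lintegral_const_mul' _ _ (ENNReal.rpow_ne_top_of_nonneg hσ₁0.le hN_top),
    ENNReal.mul_rpow_of_nonneg _ _ (by positivity), one_div, ENNReal.rpow_rpow_inv hσ₁0.ne',
    mul_comm, ← ENNReal.ofReal_rpow_of_nonneg hC.le (by positivity)]
  gcongr

end HardyLittlewoodSobolev

section Interpolation

variable {α ε : Type*} [MeasurableSpace α] {μ : Measure α} [TopologicalSpace ε] [ContinuousENorm ε]

theorem eLpNorm_le_of_ae_le_of_eLpNorm_le {f : α → ε} {p q : ℝ≥0∞} (hp : p ≠ 0) (hpq : p ≤ q)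
    {W : ℝ≥0∞} (hW : ∀ᵐ x ∂μ, ‖f x‖ₑ ≤ W) (hf : eLpNorm f p μ ≤ W) : eLpNorm f q μ ≤ W := by
  rcases eq_or_ne W ∞ with rfl | hW_top
  · exact le_top
  rcases eq_or_ne q ∞ with rfl | hq_top
  · rw [eLpNorm_exponent_top]
    exact essSup_le_of_ae_le W hW
  have hp_top : p ≠ ∞ := ne_top_of_le_ne_top hq_top hpq
  have hp_pos : 0 < p.toReal := ENNReal.toReal_pos hp hp_top
  have hpq_real : p.toReal ≤ q.toReal := ENNReal.toReal_mono hq_top hpq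
  have hq_pos : 0 < q.toReal := hp_pos.trans_le hpq_real
  have rpow_split (a : ℝ≥0∞) : a ^ q.toReal = a ^ (q.toReal - p.toReal) * a ^ p.toReal := by
    rw [← ENNReal.rpow_add_of_nonneg _ _ (sub_nonneg.2 hpq_real) hp_pos.le, sub_add_cancel]
  rw [eLpNorm_eq_lintegral_rpow_enorm_toReal hp hp_top, one_div,
    ENNReal.rpow_inv_le_iff hp_pos] at hf
  rw [eLpNorm_eq_lintegral_rpow_enorm_toReal (hp.bot_lt.trans_le hpq).ne' hq_top, one_div,
    ENNReal.rpow_inv_le_iff hq_pos]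
  calc ∫⁻ x, ‖f x‖ₑ ^ q.toReal ∂μ
    _ ≤ ∫⁻ x, W ^ (q.toReal - p.toReal) * ‖f x‖ₑ ^ p.toReal ∂μ := by
        refine lintegral_mono_ae (hW.mono fun x hx => ?_)
        rw [rpow_split]
        exact mul_le_mul_left (ENNReal.rpow_le_rpow hx (sub_nonneg.2 hpq_real)) _
    _ = W ^ (q.toReal - p.toReal) * ∫⁻ x, ‖f x‖ₑ ^ p.toReal ∂μ :=
        lintegral_const_mul' _ _
          (ENNReal.rpow_ne_top_of_nonneg (sub_nonneg.2 hpq_real) hW_top)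
    _ ≤ W ^ (q.toReal - p.toReal) * W ^ p.toReal := by gcongr
    _ = W ^ q.toReal := (rpow_split W).symm

end Interpolation

local notation:67 f:68 " ⋆ " g:67 =>
  MeasureTheory.convolution f g (ContinuousLinearMap.mul ℝ ℝ) volume

section Convolution

variable {E : Type*} [NormedAddCommGroup E] [InnerProductSpace ℝ E] [FiniteDimensional ℝ E]
  [MeasurableSpace E] [BorelSpace E] {f g k : E → ℝ}

theorem convolution_mul_apply (f g : E → ℝ) (x : E) : (f ⋆ g) x = ∫ y, f y * g (x - y) := rfl

theorem convolution_mul_comm (f g : E → ℝ) : f ⋆ g = g ⋆ f := by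
  rw [← convolution_flip, ContinuousLinearMap.flip_mul]

/-- The class of continuous, bounded and integrable functions, on which convolution is an
everywhere defined commutative and associative product. -/
structure IsTame (f : E → ℝ) : Prop where
  continuous : Continuous f
  bounded : ∃ C, ∀ x, ‖f x‖ ≤ C
  integrable : Integrable f

namespace IsTame

theorem measurable (hf : IsTame f) : Measurable f := hf.continuous.measurable

theorem of_schwartz (f : SchwartzMap E ℝ) : IsTame f where
  continuous := f.continuous
  bounded := ⟨_, f.toBoundedContinuousFunction.norm_coe_le_norm⟩
  integrable := f.integrable

theorem zero : IsTame (0 : E → ℝ) :=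
  ⟨continuous_zero, ⟨0, fun _ => norm_zero.le⟩, integrable_zero ..⟩

theorem norm (hf : IsTame f) : IsTame fun x => ‖f x‖ :=
  ⟨hf.continuous.norm, hf.bounded.imp fun _ hC x => (norm_norm _).trans_le (hC x),
    hf.integrable.norm⟩

theorem add (hf : IsTame f) (hg : IsTame g) : IsTame (f + g) := by
  obtain ⟨C, hC⟩ := hf.bounded
  obtain ⟨D, hD⟩ := hg.bounded
  exact ⟨hf.continuous.add hg.continuous, ⟨C + D, fun x => norm_add_le_of_le (hC x) (hD x)⟩,
    hf.integrable.add hg.integrable⟩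

theorem integrable_mul_comp_sub (hf : IsTame f) (hg : IsTame g) (x : E) :
    Integrable fun y => f y * g (x - y) := by
  obtain ⟨C, hC⟩ := hg.bounded
  exact hf.integrable.mul_bdd (hg.continuous.comp (by fun_prop)).aestronglyMeasurable
    (ae_of_all _ fun y => hC (x - y))

theorem convolution (hf : IsTame f) (hg : IsTame g) : IsTame (f ⋆ g) := by
  obtain ⟨C, hC⟩ := hg.bounded
  refine ⟨BddAbove.continuous_convolution_right_of_integrable _
    ⟨C, Set.forall_mem_range.2 hC⟩ hf.integrable hg.continuous, ⟨∫ y, ‖f y‖ * C, fun x => ?_⟩,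
    hf.integrable.integrable_convolution _ hg.integrable⟩
  rw [convolution_mul_apply]
  refine norm_integral_le_of_norm_le (hf.integrable.norm.mul_const C) (ae_of_all _ fun y => ?_)
  rw [norm_mul]
  exact mul_le_mul_of_nonneg_left (hC _) (norm_nonneg _)

theorem convolution_assoc (hf : IsTame f) (hg : IsTame g) (hk : IsTame k) :
    (f ⋆ g) ⋆ k = f ⋆ g ⋆ k := by
  ext x
  exact MeasureTheory.convolution_assoc _ _ _ _ (fun a b c => mul_assoc a b c)
    hf.continuous.aestronglyMeasurable hg.continuous.aestronglyMeasurable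
    hk.continuous.aestronglyMeasurable
    (ae_of_all _ fun y => hf.integrable_mul_comp_sub hg y)
    (ae_of_all _ fun y => hg.norm.integrable_mul_comp_sub hk.norm y)
    (hf.norm.integrable_mul_comp_sub (hg.norm.convolution hk.norm) x)

theorem convolution_left_comm (hf : IsTame f) (hg : IsTame g) (hk : IsTame k) :
    f ⋆ g ⋆ k = g ⋆ f ⋆ k := by
  rw [← hf.convolution_assoc hg hk, convolution_mul_comm f, hg.convolution_assoc hf hk]

theorem add_convolution (hf : IsTame f) (hg : IsTame g) (hk : IsTame k) :
    (f + g) ⋆ k = f ⋆ k + g ⋆ k := by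
  ext x
  exact ConvolutionExistsAt.add_distrib (hf.integrable_mul_comp_sub hk x)
    (hg.integrable_mul_comp_sub hk x)

theorem eLpNorm_ne_top (hf : IsTame f) {p : ℝ≥0∞} (hp : 1 ≤ p) : eLpNorm f p volume ≠ ∞ := by
  obtain ⟨C, hC⟩ := hf.bounded
  have hf_one : eLpNorm f 1 volume < ∞ := (memLp_one_iff_integrable.2 hf.integrable).2
  refine ((eLpNorm_le_of_ae_le_of_eLpNorm_le one_ne_zero hp (ae_of_all _ fun x => ?_)
    (le_max_left _ (ENNReal.ofReal C))).trans_lt (max_lt hf_one ENNReal.ofReal_lt_top)).ne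
  rw [← ofReal_norm]
  exact (ENNReal.ofReal_le_ofReal (hC x)).trans (le_max_right ..)

end IsTame

variable {p p₀ p₁ q : ℝ≥0∞}

theorem eLpNorm_convolution_le (hf : Measurable f) (hg : Measurable g) (hp : 1 ≤ p) :
    eLpNorm (f ⋆ g) p volume ≤ eLpNorm f 1 volume * eLpNorm g p volume := by
  have hfg : Measurable (Function.uncurry fun y x => f y * g (x - y)) :=
    (hf.comp measurable_fst).mul (hg.comp (measurable_snd.sub measurable_fst))
  calc eLpNorm (f ⋆ g) p volume
    _ ≤ ∫⁻ y, eLpNorm (fun x => f y * g (x - y)) p volume := eLpNorm_integral_le hfg hp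
    _ = ∫⁻ y, ‖f y‖ₑ * eLpNorm g p volume := by
        refine lintegral_congr fun y => ?_
        rw [← eLpNorm_comp_measurePreserving hg.aestronglyMeasurable
          (measurePreserving_sub_right volume y)]
        exact eLpNorm_const_smul (f y) _ p volume
    _ = eLpNorm f 1 volume * eLpNorm g p volume := by
        rw [lintegral_mul_const _ hf.enorm, eLpNorm_one_eq_lintegral_enorm]

theorem lintegral_enorm_mul_comp_sub_le [p.HolderConjugate q] (hf : Measurable f)
    (hg : Measurable g) (x : E) :
    ∫⁻ y, ‖f y * g (x - y)‖ₑ ≤ eLpNorm f p volume * eLpNorm g q volume := by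
  have hg_sub : eLpNorm (fun y => g (x - y)) q volume = eLpNorm g q volume :=
    eLpNorm_comp_measurePreserving hg.aestronglyMeasurable
      (Measure.measurePreserving_sub_left volume x)
  calc ∫⁻ y, ‖f y * g (x - y)‖ₑ
    _ = eLpNorm (f • fun y => g (x - y)) 1 volume := eLpNorm_one_eq_lintegral_enorm.symm
    _ ≤ eLpNorm f p volume * eLpNorm g q volume :=
        hg_sub ▸ eLpNorm_smul_le_mul_eLpNorm
          (hg.comp (measurable_const.sub measurable_id)).aestronglyMeasurable
          hf.aestronglyMeasurable

theorem IsTame.exists_lintegral_enorm_mul_comp_sub_le (hf : IsTame f) (hp : 1 ≤ p) :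
    ∃ A ≠ ∞, ∀ g : E → ℝ, Measurable g → ∀ x,
      ∫⁻ y, ‖f y * g (x - y)‖ₑ ≤ A * eLpNorm g p volume := by
  have := ENNReal.HolderConjugate.inv_one_sub_inv' hp
  set r := (1 - p⁻¹)⁻¹
  exact ⟨eLpNorm f r volume, hf.eLpNorm_ne_top (ENNReal.HolderConjugate.one_le r p),
    fun g hg x => lintegral_enorm_mul_comp_sub_le hf.measurable hg x⟩

theorem IsTame.exists_eLpNorm_convolution_le (hf : IsTame f) (hp₀ : 1 ≤ p₀) (hp : p₀ ≤ p₁) :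
    ∃ A ≠ ∞, ∀ g : E → ℝ, Measurable g →
      eLpNorm (f ⋆ g) p₁ volume ≤ A * eLpNorm g p₀ volume := by
  obtain ⟨A, hA_top, hA⟩ := hf.exists_lintegral_enorm_mul_comp_sub_le hp₀
  refine ⟨max A (eLpNorm f 1 volume),
    (max_lt hA_top.lt_top (hf.eLpNorm_ne_top le_rfl).lt_top).ne, fun g hg => ?_⟩
  refine eLpNorm_le_of_ae_le_of_eLpNorm_le (one_pos.trans_le hp₀).ne' hp
    (ae_of_all _ fun x => ?_) ?_
  · exact (enorm_integral_le_lintegral_enorm _).trans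
      ((hA g hg x).trans (mul_le_mul_left (le_max_left ..) _))
  · exact (eLpNorm_convolution_le hf.measurable hg hp₀).trans
      (mul_le_mul_left (le_max_right ..) _)

variable {α : Type*} [MeasurableSpace α] {μ : Measure α} {F : α → E → ℝ}

theorem measurable_uncurry_convolution {K : α → E → ℝ} (hK : Measurable (Function.uncurry K))
    (hF : Measurable (Function.uncurry F)) :
    Measurable (Function.uncurry fun a => K a ⋆ F a) := by
  have h_integrand : StronglyMeasurable
      fun z : (α × E) × E => K z.1.1 z.2 * F z.1.1 (z.1.2 - z.2) :=
    ((hK.comp (measurable_fst.fst.prodMk measurable_snd)).mul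
      (hF.comp (measurable_fst.fst.prodMk
        (measurable_fst.snd.sub measurable_snd)))).stronglyMeasurable
  exact h_integrand.integral_prod_right.measurable

namespace IsTame

theorem convolution_integral [SFinite μ] (hk : IsTame k) (hF : Measurable (Function.uncurry F))
    (hp : 1 ≤ p) (hF_fin : ∫⁻ a, eLpNorm (F a) p volume ∂μ ≠ ∞) :
    k ⋆ (fun x => ∫ a, F a x ∂μ) = fun x => ∫ a, (k ⋆ F a) x ∂μ := by
  ext x
  obtain ⟨A, hA_top, hA⟩ := hk.exists_lintegral_enorm_mul_comp_sub_le hp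
  have h_meas : Measurable (Function.uncurry fun a y => k y * F a (x - y)) :=
    (hk.measurable.comp measurable_snd).mul
      (hF.comp (measurable_fst.prodMk (measurable_const.sub measurable_snd)))
  have h_int : Integrable (Function.uncurry fun a y => k y * F a (x - y)) (μ.prod volume) := by
    refine ⟨h_meas.aestronglyMeasurable, ?_⟩
    calc ∫⁻ z, ‖k z.2 * F z.1 (x - z.2)‖ₑ ∂μ.prod volume
      _ = ∫⁻ a, (∫⁻ y, ‖k y * F a (x - y)‖ₑ) ∂μ := lintegral_prod _ h_meas.enorm.aemeasurable
      _ ≤ ∫⁻ a, A * eLpNorm (F a) p volume ∂μ :=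
          lintegral_mono fun a => hA _ hF.of_uncurry_left x
      _ = A * ∫⁻ a, eLpNorm (F a) p volume ∂μ := lintegral_const_mul' _ _ hA_top
      _ < ∞ := ENNReal.mul_lt_top hA_top.lt_top hF_fin.lt_top
  calc (k ⋆ fun x => ∫ a, F a x ∂μ) x
    _ = ∫ y, ∫ a, k y * F a (x - y) ∂μ :=
        integral_congr_ae (ae_of_all _ fun y => (integral_const_mul _ _).symm)
    _ = ∫ a, (k ⋆ F a) x ∂μ := (integral_integral_swap h_int).symm

theorem eLpNorm_convolution_integral_le [SFinite μ] (hk : IsTame k)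
    (hF : Measurable (Function.uncurry F)) (hp : 1 ≤ p)
    (hF_fin : ∫⁻ a, eLpNorm (F a) p volume ∂μ ≠ ∞) (hq : 1 ≤ q) :
    eLpNorm (k ⋆ fun x => ∫ a, F a x ∂μ) q volume ≤ ∫⁻ a, eLpNorm (k ⋆ F a) q volume ∂μ := by
  rw [hk.convolution_integral hF hp hF_fin]
  exact eLpNorm_integral_le
    (measurable_uncurry_convolution (K := fun _ => k) (hk.measurable.comp measurable_snd) hF) hq

end IsTame

end Convolution

section Dilation

open Module

variable {E : Type*} [NormedAddCommGroup E] [InnerProductSpace ℝ E]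

/-- The dilate `x ↦ f (c x)`, which for `0 < c` preserves the supremum norm. -/
def dilation (c : ℝ) (f : E → ℝ) (x : E) : ℝ :=
  f (c • x)

/-- The dilate `x ↦ c ^ d * f (c x)` in dimension `d`, which for `0 < c` preserves integrals; it is
the dilation appropriate to convolution kernels. -/
def massDilation (c : ℝ) (f : E → ℝ) (x : E) : ℝ :=
  c ^ finrank ℝ E * f (c • x)

variable {c : ℝ} {f g k : E → ℝ}

theorem dilation_dilation_inv (hc : c ≠ 0) (f : E → ℝ) : dilation c (dilation c⁻¹ f) = f := by
  ext x
  rw [dilation, dilation, inv_smul_smul₀ hc]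

theorem massDilation_one (f : E → ℝ) : massDilation 1 f = f := by
  ext x
  rw [massDilation, one_pow, one_mul, one_smul]

theorem massDilation_massDilation (c d : ℝ) (f : E → ℝ) :
    massDilation c (massDilation d f) = massDilation (c * d) f := by
  ext x
  rw [massDilation, massDilation, massDilation, smul_smul, mul_comm d c, mul_pow, mul_assoc]

theorem massDilation_add (c : ℝ) (f g : E → ℝ) :
    massDilation c (f + g) = massDilation c f + massDilation c g := by
  ext x
  exact mul_add ..

variable [FiniteDimensional ℝ E] [MeasurableSpace E] [BorelSpace E]

theorem IsTame.dilation (hf : IsTame f) (hc : c ≠ 0) : IsTame (dilation c f) :=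
  ⟨hf.continuous.comp (continuous_const_smul c), hf.bounded.imp fun _ hC x => hC (c • x),
    hf.integrable.comp_smul hc⟩

theorem IsTame.massDilation (hf : IsTame f) (hc : c ≠ 0) : IsTame (massDilation c f) := by
  obtain ⟨C, hC⟩ := hf.bounded
  refine ⟨continuous_const.mul (hf.dilation hc).continuous, ⟨‖c ^ finrank ℝ E‖ * C, fun x => ?_⟩,
    (hf.dilation hc).integrable.const_mul _⟩
  exact norm_mul_le_of_le le_rfl (hC (c • x))

theorem integral_massDilation (hc : 0 < c) (f : E → ℝ) : ∫ x, massDilation c f x = ∫ x, f x := by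
  simp only [massDilation]
  rw [integral_const_mul, Measure.integral_comp_smul_of_nonneg _ _ _ (hR := hc.le), smul_eq_mul,
    mul_inv_cancel_left₀ (by positivity)]

theorem massDilation_convolution_apply (hc : 0 < c) (k f : E → ℝ) (x : E) :
    (massDilation c k ⋆ f) x = ∫ y, k y * f (x - c⁻¹ • y) := by
  rw [convolution_mul_apply, ← integral_massDilation hc fun y => k y * f (x - c⁻¹ • y)]
  refine integral_congr_ae (ae_of_all _ fun y => ?_)
  simp only [massDilation, inv_smul_smul₀ hc.ne', mul_assoc]

theorem massDilation_convolution_dilation (hc : 0 < c) (k g : E → ℝ) :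
    massDilation c k ⋆ dilation c g = dilation c (k ⋆ g) := by
  ext x
  rw [massDilation_convolution_apply hc]
  simp only [dilation, convolution_mul_apply, smul_sub, smul_inv_smul₀ hc.ne']

theorem eLpNorm_dilation (hc : 0 < c) (f : E → ℝ) (p : ℝ≥0∞) :
    eLpNorm (dilation c f) p volume =
      ENNReal.ofReal (c ^ (-(finrank ℝ E / p.toReal))) * eLpNorm f p volume := by
  calc eLpNorm (dilation c f) p volume
    _ = eLpNorm f p (Measure.map (c • ·) volume) :=
        ((Homeomorph.smulOfNeZero c hc.ne').measurableEmbedding.eLpNorm_map_measure).symm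
    _ = ENNReal.ofReal (c ^ (-(finrank ℝ E / p.toReal))) * eLpNorm f p volume := by
        rw [Measure.map_addHaar_smul _ hc.ne', abs_of_pos (by positivity),
          eLpNorm_smul_measure_of_ne_zero (ENNReal.ofReal_pos.2 (by positivity)).ne', smul_eq_mul,
          ENNReal.ofReal_rpow_of_pos (by positivity), ← Real.rpow_natCast, ← Real.rpow_neg hc.le,
          ← Real.rpow_mul hc.le, one_div, ENNReal.toReal_inv, neg_mul, div_eq_mul_inv]

end Dilation

section Fourier

open Module

variable {E : Type*} [NormedAddCommGroup E] [InnerProductSpace ℝ E] [FiniteDimensional ℝ E]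
  [MeasurableSpace E] [BorelSpace E] {c : ℝ} {f g : E → ℝ}

/-- The Fourier transform of a real-valued function, which is complex-valued. -/
def realFourier (f : E → ℝ) : E → ℂ :=
  𝓕 fun x => (f x : ℂ)

theorem realFourier_apply (f : E → ℝ) (ξ : E) :
    realFourier f ξ = ∫ x, 𝐞 (-inner ℝ x ξ) • (f x : ℂ) :=
  Real.fourier_eq _ ξ

theorem realFourier_zero_right (f : E → ℝ) : realFourier f 0 = (∫ x, f x : ℝ) := by
  rw [realFourier_apply, ← integral_complex_ofReal]
  simp only [inner_zero_right, neg_zero, AddChar.map_zero_eq_one, one_smul]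

theorem integrable_fourierChar_smul_ofReal (hf : Integrable f) (ξ : E) :
    Integrable fun x => 𝐞 (-inner ℝ x ξ) • (f x : ℂ) :=
  (Real.fourierIntegral_convergent_iff ξ).2 hf.ofReal

theorem realFourier_add (hf : Integrable f) (hg : Integrable g) :
    realFourier (f + g) = realFourier f + realFourier g := by
  ext ξ
  rw [Pi.add_apply, realFourier_apply, realFourier_apply, realFourier_apply,
    ← integral_add (integrable_fourierChar_smul_ofReal hf ξ)
      (integrable_fourierChar_smul_ofReal hg ξ)]
  simp only [Pi.add_apply, Complex.ofReal_add, smul_add]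

theorem realFourier_convolution (hf : Integrable f) (hg : Integrable g) :
    realFourier (f ⋆ g) = realFourier f * realFourier g := by
  ext ξ
  have ofReal_convolution : (fun x => (((f ⋆ g) x : ℝ) : ℂ)) =
      convolution (fun x => (f x : ℂ)) (fun x => (g x : ℂ)) (ContinuousLinearMap.mul ℂ ℂ)
        volume := by
    ext x
    rw [convolution_mul_apply, ← integral_complex_ofReal]
    simp only [convolution_def, ContinuousLinearMap.mul_apply', Complex.ofReal_mul]
  rw [realFourier, ofReal_convolution]
  exact Real.fourier_mul_convolution_eq hf.ofReal hg.ofReal ξ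

theorem realFourier_massDilation (hc : 0 < c) (f : E → ℝ) (ξ : E) :
    realFourier (massDilation c f) ξ = realFourier f (c⁻¹ • ξ) := by
  have integrand_eq (x : E) : 𝐞 (-inner ℝ x ξ) • ((massDilation c f x : ℝ) : ℂ) =
      c ^ finrank ℝ E • (𝐞 (-inner ℝ (c • x) (c⁻¹ • ξ)) • (f (c • x) : ℂ)) := by
    rw [real_inner_smul_left, real_inner_smul_right, mul_inv_cancel_left₀ hc.ne',
      smul_comm (c ^ finrank ℝ E), massDilation, Complex.ofReal_mul, Complex.real_smul]
  rw [realFourier_apply, realFourier_apply]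
  simp only [integrand_eq]
  rw [integral_smul, Measure.integral_comp_smul_of_nonneg volume
    (fun x => 𝐞 (-inner ℝ x (c⁻¹ • ξ)) • (f x : ℂ)) _ (hR := hc.le),
    smul_inv_smul₀ (by positivity)]

theorem IsTame.eq_of_realFourier_eq (hf : IsTame f) (hg : IsTame g)
    (h : realFourier f = realFourier g) : f = g := by
  have fourier_sub : 𝓕 (fun x => (f x : ℂ) - g x) = 0 := by
    ext ξ
    rw [Real.fourier_eq, Pi.zero_apply]
    simp only [smul_sub]
    rw [integral_sub (integrable_fourierChar_smul_ofReal hf.integrable ξ)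
      (integrable_fourierChar_smul_ofReal hg.integrable ξ), ← realFourier_apply,
      ← realFourier_apply, h, sub_self]
  have inversion := Continuous.fourierInv_fourier_eq (f := fun x => (f x : ℂ) - g x)
    ((Complex.continuous_ofReal.comp hf.continuous).sub
      (Complex.continuous_ofReal.comp hg.continuous))
    (hf.integrable.ofReal.sub hg.integrable.ofReal) (fourier_sub ▸ integrable_zero ..)
  ext x
  have hx : (f x : ℂ) - g x = 0 := by
    rw [← congrFun inversion x, fourier_sub, Real.fourierInv_eq]
    simp only [Pi.zero_apply, smul_zero, integral_zero]
  exact_mod_cast sub_eq_zero.1 hx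

end Fourier

section HeatKernel

open Module

variable {E : Type*} [NormedAddCommGroup E] [InnerProductSpace ℝ E]

/-- The Gauss–Weierstrass kernel `h_τ`. -/
def heatKernel (τ : ℝ) (x : E) : ℝ :=
  (4 * π * τ) ^ (-(finrank ℝ E : ℝ) / 2) * Real.exp (-‖x‖ ^ 2 / (4 * τ))

/-- The symmetric second difference `(g (x - y) + g (x + y)) / 2 - g x`, which is what an even
kernel of mean zero sees of `g`. -/
def centralDiff (g : E → ℝ) (y x : E) : ℝ :=
  (g (x - y) + g (x + y)) / 2 - g x

variable {τ c : ℝ} {f g k : E → ℝ}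

theorem heatKernel_nonneg (hτ : 0 ≤ τ) (x : E) : 0 ≤ heatKernel τ x := by
  unfold heatKernel
  positivity

theorem exp_neg_sq_div_le_one (hτ : 0 ≤ τ) (r : ℝ) : Real.exp (-r ^ 2 / (4 * τ)) ≤ 1 := by
  rw [Real.exp_le_one_iff]
  exact div_nonpos_of_nonpos_of_nonneg (neg_nonpos.2 (by positivity)) (by positivity)

@[fun_prop]
theorem continuous_heatKernel : Continuous (heatKernel τ : E → ℝ) := by
  unfold heatKernel
  fun_prop

theorem massDilation_heatKernel (hτ : 0 < τ) (hc : 0 < c) :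
    massDilation c (heatKernel (c ^ 2 * τ)) = (heatKernel τ : E → ℝ) := by
  ext x
  have hc_rpow : (c ^ 2) ^ (-(finrank ℝ E : ℝ) / 2) = (c ^ finrank ℝ E)⁻¹ := by
    rw [← Real.rpow_natCast, ← Real.rpow_natCast, ← Real.rpow_mul hc.le, ← Real.rpow_neg hc.le]
    congr 1
    push_cast
    ring
  have exponent_eq : -‖c • x‖ ^ 2 / (4 * (c ^ 2 * τ)) = -‖x‖ ^ 2 / (4 * τ) := by
    rw [norm_smul, Real.norm_of_nonneg hc.le]
    field_simp
  have time_eq : 4 * π * (c ^ 2 * τ) = c ^ 2 * (4 * π * τ) := by ring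
  rw [massDilation, heatKernel, exponent_eq, time_eq, Real.mul_rpow (by positivity)
    (by positivity), hc_rpow, heatKernel]
  field_simp

theorem exp_mul_heatKernel_le (hτ : 0 < τ) (x y : E) :
    Real.exp (-‖y‖ ^ 2 / (4 * τ)) * heatKernel τ x ≤
      (heatKernel τ (x - y) + heatKernel τ (x + y)) / 2 := by
  set w : ℝ := inner ℝ x y / (2 * τ) with hw
  have exp_sub : Real.exp (-‖x - y‖ ^ 2 / (4 * τ)) =
      Real.exp (-‖y‖ ^ 2 / (4 * τ)) * Real.exp (-‖x‖ ^ 2 / (4 * τ)) * Real.exp w := by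
    rw [norm_sub_sq_real, ← Real.exp_add, ← Real.exp_add, hw]
    congr 1
    field_simp
    ring
  have exp_add : Real.exp (-‖x + y‖ ^ 2 / (4 * τ)) =
      Real.exp (-‖y‖ ^ 2 / (4 * τ)) * Real.exp (-‖x‖ ^ 2 / (4 * τ)) * Real.exp (-w) := by
    rw [norm_add_sq_real, ← Real.exp_add, ← Real.exp_add, hw]
    congr 1
    field_simp
    ring
  calc Real.exp (-‖y‖ ^ 2 / (4 * τ)) * heatKernel τ x
    _ ≤ Real.exp (-‖y‖ ^ 2 / (4 * τ)) * heatKernel τ x * Real.cosh w :=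
        le_mul_of_one_le_right (mul_nonneg (Real.exp_nonneg _) (heatKernel_nonneg hτ.le x))
          (Real.one_le_cosh w)
    _ = (heatKernel τ (x - y) + heatKernel τ (x + y)) / 2 := by
        simp only [heatKernel, exp_sub, exp_add, Real.cosh_eq]
        ring

theorem abs_centralDiff_heatKernel_le (hτ : 0 < τ) (x y : E) :
    |centralDiff (heatKernel τ) y x| ≤ (heatKernel τ (x - y) + heatKernel τ (x + y)) / 2 +
      (1 - 2 * Real.exp (-‖y‖ ^ 2 / (4 * τ))) * heatKernel τ x := by
  have h_lower := exp_mul_heatKernel_le hτ x y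
  have h_exp : Real.exp (-‖y‖ ^ 2 / (4 * τ)) * heatKernel τ x ≤ heatKernel τ x :=
    mul_le_of_le_one_left (heatKernel_nonneg hτ.le x) (exp_neg_sq_div_le_one hτ.le _)
  rw [centralDiff, abs_le]
  constructor <;> linarith

variable [FiniteDimensional ℝ E] [MeasurableSpace E] [BorelSpace E]

theorem integral_heatKernel (hτ : 0 < τ) : ∫ x : E, heatKernel τ x = 1 := by
  have exponent_eq (x : E) : -‖x‖ ^ 2 / (4 * τ) = -(1 / (4 * τ)) * ‖x‖ ^ 2 := by ring
  simp only [heatKernel, exponent_eq]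
  rw [integral_const_mul, GaussianFourier.integral_rexp_neg_mul_sq_norm (by positivity),
    div_div_eq_mul_div, div_one, mul_left_comm, ← mul_assoc, ← Real.rpow_add (by positivity),
    neg_div, neg_add_cancel, Real.rpow_zero]

theorem isTame_heatKernel (hτ : 0 < τ) : IsTame (heatKernel τ : E → ℝ) where
  continuous := continuous_heatKernel
  bounded := by
    refine ⟨(4 * π * τ) ^ (-(finrank ℝ E : ℝ) / 2), fun x => ?_⟩
    rw [Real.norm_of_nonneg (heatKernel_nonneg hτ.le x)]
    exact mul_le_of_le_one_right (by positivity) (exp_neg_sq_div_le_one hτ.le _)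
  integrable := Integrable.of_integral_ne_zero (by rw [integral_heatKernel hτ]; exact one_ne_zero)

theorem eLpNorm_one_heatKernel (hτ : 0 < τ) : eLpNorm (heatKernel τ : E → ℝ) 1 volume = 1 := by
  rw [eLpNorm_one_eq_lintegral_enorm, ← ofReal_integral_norm_eq_lintegral_enorm
    (isTame_heatKernel hτ).integrable]
  simp only [Real.norm_of_nonneg (heatKernel_nonneg hτ.le _)]
  rw [integral_heatKernel hτ, ENNReal.ofReal_one]

theorem eLpNorm_one_centralDiff_heatKernel_le (hτ : 0 < τ) (y : E) :
    eLpNorm (centralDiff (heatKernel τ) y) 1 volume ≤ ENNReal.ofReal (‖y‖ ^ 2 / (2 * τ)) := by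
  have h_int : Integrable (heatKernel τ : E → ℝ) := (isTame_heatKernel hτ).integrable
  have h_mean : Integrable fun x => (heatKernel τ (x - y) + heatKernel τ (x + y)) / 2 :=
    ((h_int.comp_sub_right y).add (h_int.comp_add_right y)).div_const 2
  have h_diff : Integrable (centralDiff (heatKernel τ) y) := h_mean.sub h_int
  rw [eLpNorm_one_eq_lintegral_enorm, ← ofReal_integral_norm_eq_lintegral_enorm h_diff]
  refine ENNReal.ofReal_le_ofReal ?_
  set e := Real.exp (-‖y‖ ^ 2 / (4 * τ))
  calc ∫ x, ‖centralDiff (heatKernel τ) y x‖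
    _ ≤ ∫ x, ((heatKernel τ (x - y) + heatKernel τ (x + y)) / 2 +
          (1 - 2 * e) * heatKernel τ x) :=
        integral_mono h_diff.norm (h_mean.add (h_int.const_mul _))
          fun x => abs_centralDiff_heatKernel_le hτ x y
    _ = 2 * (1 - e) := by
        rw [integral_add h_mean (h_int.const_mul _), integral_div,
          integral_add (h_int.comp_sub_right y) (h_int.comp_add_right y), integral_const_mul,
          integral_sub_right_eq_self (heatKernel τ), integral_add_right_eq_self (heatKernel τ),
          integral_heatKernel hτ]
        ring
    _ ≤ 2 * (‖y‖ ^ 2 / (4 * τ)) := by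
        have : -‖y‖ ^ 2 / (4 * τ) + 1 ≤ e := Real.add_one_le_exp _
        rw [neg_div] at this
        linarith
    _ = ‖y‖ ^ 2 / (2 * τ) := by ring

theorem convolution_eq_integral_mul_centralDiff (hk : IsTame k) (hk_even : ∀ x, k (-x) = k x)
    (hk_mean : ∫ x, k x = 0) (hg : IsTame g) (x : E) :
    (k ⋆ g) x = ∫ y, k y * centralDiff g y x := by
  have int_sub : Integrable fun y => k y * g (x - y) := hk.integrable_mul_comp_sub hg x
  have comp_neg (y : E) : k (-y) * g (x - -y) = k y * g (x + y) := by
    rw [hk_even, sub_neg_eq_add]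
  have int_add : Integrable fun y => k y * g (x + y) :=
    int_sub.comp_neg.congr (ae_of_all _ comp_neg)
  have integral_add_eq : ∫ y, k y * g (x + y) = (k ⋆ g) x := by
    rw [convolution_mul_apply, ← integral_neg_eq_self fun y => k y * g (x - y)]
    exact integral_congr_ae (ae_of_all _ fun y => (comp_neg y).symm)
  have integrand_eq (y : E) : k y * centralDiff g y x =
      (k y * g (x - y) + k y * g (x + y)) / 2 - k y * g x := by
    rw [centralDiff]
    ring
  have int_mean : Integrable fun y => (k y * g (x - y) + k y * g (x + y)) / 2 :=
    (int_sub.add int_add).div_const 2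
  simp only [integrand_eq]
  rw [integral_sub int_mean (hk.integrable.mul_const _), integral_div,
    integral_add int_sub int_add, integral_add_eq, ← convolution_mul_apply, integral_mul_const,
    hk_mean]
  ring

theorem eLpNorm_one_convolution_heatKernel_le (hk : IsTame k) (hk_even : ∀ x, k (-x) = k x)
    (hk_mean : ∫ x, k x = 0) (hτ : 0 < τ) :
    eLpNorm (k ⋆ heatKernel τ) 1 volume ≤
      eLpNorm (fun y => ‖y‖ ^ 2 * k y) 1 volume * ENNReal.ofReal τ⁻¹ := by
  have h_meas : Measurable (Function.uncurry fun y x => k y * centralDiff (heatKernel τ) y x) := by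
    have := hk.continuous
    refine Continuous.measurable ?_
    unfold centralDiff
    fun_prop
  have h_eq : k ⋆ heatKernel τ = fun x => ∫ y, k y * centralDiff (heatKernel τ) y x :=
    funext (convolution_eq_integral_mul_centralDiff hk hk_even hk_mean (isTame_heatKernel hτ))
  calc eLpNorm (k ⋆ heatKernel τ) 1 volume
    _ ≤ ∫⁻ y, eLpNorm (fun x => k y * centralDiff (heatKernel τ) y x) 1 volume := by
        rw [h_eq]
        exact eLpNorm_integral_le h_meas le_rfl
    _ = ∫⁻ y, ‖k y‖ₑ * eLpNorm (centralDiff (heatKernel τ) y) 1 volume :=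
        lintegral_congr fun y => eLpNorm_const_smul (k y) _ 1 volume
    _ ≤ ∫⁻ y, ‖‖y‖ ^ 2 * k y‖ₑ * ENNReal.ofReal τ⁻¹ := by
        refine lintegral_mono fun y => ?_
        calc ‖k y‖ₑ * eLpNorm (centralDiff (heatKernel τ) y) 1 volume
          _ ≤ ‖k y‖ₑ * ENNReal.ofReal (‖y‖ ^ 2 * τ⁻¹) := by
              refine mul_le_mul_right ((eLpNorm_one_centralDiff_heatKernel_le hτ y).trans
                (ENNReal.ofReal_le_ofReal ?_)) _
              rw [← div_eq_mul_inv]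
              gcongr
              linarith
          _ = ‖‖y‖ ^ 2 * k y‖ₑ * ENNReal.ofReal τ⁻¹ := by
              rw [ENNReal.ofReal_mul (by positivity), enorm_mul,
                ← Real.enorm_of_nonneg (by positivity : 0 ≤ ‖y‖ ^ 2)]
              ring
    _ = eLpNorm (fun y => ‖y‖ ^ 2 * k y) 1 volume * ENNReal.ofReal τ⁻¹ := by
        rw [lintegral_mul_const' _ _ ENNReal.ofReal_ne_top, eLpNorm_one_eq_lintegral_enorm]

theorem exists_eLpNorm_one_convolution_heatKernel_le (hk : IsTame k)
    (hk_even : ∀ x, k (-x) = k x) (hk_mean : ∫ x, k x = 0)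
    (hk_moment : Integrable fun x => ‖x‖ ^ 2 * k x) {θ : ℝ} (hθ₀ : 0 ≤ θ) (hθ₁ : θ ≤ 1) :
    ∃ M ≠ ∞, ∀ τ : ℝ, 0 < τ →
      eLpNorm (k ⋆ heatKernel τ) 1 volume ≤ M * ENNReal.ofReal (τ ^ (-θ)) := by
  have hk_one : eLpNorm k 1 volume < ∞ := (hk.eLpNorm_ne_top le_rfl).lt_top
  have hk_moment_one : eLpNorm (fun x => ‖x‖ ^ 2 * k x) 1 volume < ∞ :=
    (memLp_one_iff_integrable.2 hk_moment).2
  refine ⟨_, (max_lt hk_one hk_moment_one).ne, fun τ hτ => ?_⟩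
  rcases le_total τ 1 with hτ₁ | hτ₁
  · calc eLpNorm (k ⋆ heatKernel τ) 1 volume
      _ ≤ eLpNorm k 1 volume * 1 :=
          (eLpNorm_convolution_le hk.measurable continuous_heatKernel.measurable le_rfl).trans_eq
            (by rw [eLpNorm_one_heatKernel hτ])
      _ ≤ _ := by
          refine mul_le_mul' (le_max_left ..) ?_
          rw [ENNReal.one_le_ofReal]
          exact Real.one_le_rpow_of_pos_of_le_one_of_nonpos hτ hτ₁ (neg_nonpos.2 hθ₀)
  · refine (eLpNorm_one_convolution_heatKernel_le hk hk_even hk_mean hτ).trans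
      (mul_le_mul' (le_max_right ..) (ENNReal.ofReal_le_ofReal ?_))
    rw [← Real.rpow_neg_one]
    exact Real.rpow_le_rpow_of_exponent_le hτ₁ (neg_le_neg hθ₁)

end HeatKernel

section ApproximateIdentity

variable {E : Type*} [NormedAddCommGroup E] [InnerProductSpace ℝ E] [FiniteDimensional ℝ E]
  [MeasurableSpace E] [BorelSpace E] {f k : E → ℝ} {ι : Type*} {l : Filter ι} {c : ι → ℝ}

theorem tendsto_massDilation_convolution [l.IsCountablyGenerated] (hk : Integrable k)
    (hf : IsTame f) (hc : Tendsto c l atTop) (x : E) :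
    Tendsto (fun i => (massDilation (c i) k ⋆ f) x) l (nhds ((∫ y, k y) * f x)) := by
  obtain ⟨C, hC⟩ := hf.bounded
  have apply_eq : (fun i => ∫ y, k y * f (x - (c i)⁻¹ • y)) =ᶠ[l]
      fun i => (massDilation (c i) k ⋆ f) x :=
    (hc.eventually_gt_atTop 0).mono fun i hi => (massDilation_convolution_apply hi k f x).symm
  refine Tendsto.congr' apply_eq ?_
  rw [← integral_mul_const]
  refine tendsto_integral_filter_of_dominated_convergence (fun y => ‖k y‖ * C)
    (Eventually.of_forall fun i => hk.aestronglyMeasurable.mul ?_)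
    (Eventually.of_forall fun i => ae_of_all _ fun y => norm_mul_le_of_le le_rfl (hC _))
    (hk.norm.mul_const C) (ae_of_all _ fun y => Tendsto.const_mul _ ?_)
  · have := hf.continuous
    exact (by fun_prop : Continuous fun y => f (x - (c i)⁻¹ • y)).aestronglyMeasurable
  · have shift_tendsto : Tendsto (fun i => x - (c i)⁻¹ • y) l (nhds (x - (0 : ℝ) • y)) :=
      tendsto_const_nhds.sub (hc.inv_tendsto_atTop.smul_const y)
    rw [zero_smul, sub_zero] at shift_tendsto
    exact (hf.continuous.tendsto x).comp shift_tendsto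

end ApproximateIdentity

section LittlewoodPaley

variable {ψ₀ Ψ : SchwartzMap (Rn n) ℝ} {f : Rn n → ℝ} {ξ : Rn n}

theorem heatOp_eq_convolution (t : ℝ) (f : Rn n → ℝ) : heatOp n t f = heatKernel t ⋆ f := by
  unfold heatOp heatKernel
  rw [finrank_euclideanSpace_fin]

theorem lpProj_natCast_eq_convolution (ψ₀ : SchwartzMap (Rn n) ℝ) (j : ℕ) (f : Rn n → ℝ) :
    lpProj ψ₀ j f = massDilation (2 ^ j) ψ₀ ⋆ f := by
  have kernel_eq : lpKernel ψ₀ j = massDilation (2 ^ j) ψ₀ := by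
    ext x
    rw [lpKernel, massDilation, finrank_euclideanSpace_fin, zpow_mul, zpow_natCast, zpow_natCast]
  rw [lpProj, kernel_eq]

theorem realFourier_coe (f : SchwartzMap (Rn n) ℝ) : realFourier f = ftC f := rfl

theorem IsLPF.ft_eq_zero (hψ : IsLPF n ψ₀) (hξ : ‖ξ‖ ≤ 1 / 2 ∨ 2 ≤ ‖ξ‖) : ftC ψ₀ ξ = 0 := by
  by_contra h_ne
  obtain ⟨h_lower, h_upper⟩ := hψ.ft_supp ξ h_ne
  rcases hξ with h | h <;> linarith

theorem IsLPF.summable_ft (hψ : IsLPF n ψ₀) (ξ : Rn n) :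
    Summable fun k : ℕ => ftC ψ₀ ((2 : ℝ) ^ (-(k : ℤ)) • ξ) := by
  rcases eq_or_ne ξ 0 with rfl | h_ne
  · simp only [smul_zero, hψ.ft_eq_zero (ξ := 0) (Or.inl (by simp)), summable_zero]
  · exact (hψ.ft_sum ξ h_ne).summable.comp_injective (i := fun k : ℕ => (k : ℤ)) Nat.cast_injective

theorem IsLowPiece.ft_inv_two_smul (hψ : IsLPF n ψ₀) (hΨ : IsLowPiece ψ₀ Ψ) (ξ : Rn n) :
    ftC Ψ ((2 : ℝ)⁻¹ • ξ) = ftC Ψ ξ + ftC ψ₀ ξ := by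
  have shift (k : ℕ) : (2 : ℝ) ^ (-(k : ℤ)) • (2 : ℝ)⁻¹ • ξ =
      (2 : ℝ) ^ (-((k + 1 : ℕ) : ℤ)) • ξ := by
    rw [smul_smul, ← zpow_neg_one, ← zpow_add₀ two_ne_zero]
    push_cast
    rw [neg_add]
  rw [hΨ, hΨ ξ, (hψ.summable_ft ξ).tsum_eq_zero_add]
  simp only [shift, Nat.cast_zero, neg_zero, zpow_zero, one_smul]
  ring

theorem IsLowPiece.ft_eq_one (hψ : IsLPF n ψ₀) (hΨ : IsLowPiece ψ₀ Ψ) (hξ : ‖ξ‖ ≤ 1 / 2) :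
    ftC Ψ ξ = 1 := by
  have term_eq_zero (k : ℕ) : ftC ψ₀ ((2 : ℝ) ^ (-(k : ℤ)) • ξ) = 0 := by
    refine hψ.ft_eq_zero (Or.inl ?_)
    rw [norm_smul, Real.norm_of_nonneg (by positivity)]
    exact (mul_le_of_le_one_left (norm_nonneg ξ)
      (zpow_le_one_of_nonpos₀ one_le_two (by lia))).trans hξ
  simp only [hΨ ξ, term_eq_zero, tsum_zero, sub_zero]

theorem IsLowPiece.ft_eq_zero (hψ : IsLPF n ψ₀) (hΨ : IsLowPiece ψ₀ Ψ) (hξ : 1 ≤ ‖ξ‖) :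
    ftC Ψ ξ = 0 := by
  have negative_eq_zero (j : ℤ) (hj : j ∉ Set.range ((↑) : ℕ → ℤ)) :
      ftC ψ₀ ((2 : ℝ) ^ (-j) • ξ) = 0 := by
    have hj_neg : 1 ≤ -j := by
      by_contra h
      exact hj ⟨j.toNat, by lia⟩
    have h_two : (2 : ℝ) ^ (1 : ℤ) ≤ 2 ^ (-j) := zpow_le_zpow_right₀ one_le_two hj_neg
    rw [zpow_one] at h_two
    refine hψ.ft_eq_zero (Or.inr ?_)
    rw [norm_smul, Real.norm_of_nonneg (by positivity)]
    exact h_two.trans (le_mul_of_one_le_right (by positivity) hξ)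
  have h_sum : HasSum (fun k : ℕ => ftC ψ₀ ((2 : ℝ) ^ (-(k : ℤ)) • ξ)) 1 :=
    (Function.Injective.hasSum_iff Nat.cast_injective negative_eq_zero).2
      (hψ.ft_sum ξ (norm_pos_iff.1 (one_pos.trans_le hξ)))
  rw [hΨ ξ, h_sum.tsum_eq, sub_self]

theorem IsLowPiece.massDilation_two (hψ : IsLPF n ψ₀) (hΨ : IsLowPiece ψ₀ Ψ) :
    massDilation 2 Ψ = ⇑Ψ + ⇑ψ₀ := by
  refine ((IsTame.of_schwartz Ψ).massDilation two_ne_zero).eq_of_realFourier_eq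
    ((IsTame.of_schwartz Ψ).add (IsTame.of_schwartz ψ₀)) ?_
  ext ξ
  rw [realFourier_massDilation two_pos, realFourier_add Ψ.integrable ψ₀.integrable]
  exact IsLowPiece.ft_inv_two_smul hψ hΨ ξ

theorem IsLowPiece.massDilation_two_convolution (hψ : IsLPF n ψ₀) (hΨ : IsLowPiece ψ₀ Ψ) :
    massDilation 2 Ψ ⋆ Ψ = ⇑Ψ := by
  have tame_Ψ := IsTame.of_schwartz Ψ
  have tame_dilate := tame_Ψ.massDilation (two_ne_zero (α := ℝ))
  refine (tame_dilate.convolution tame_Ψ).eq_of_realFourier_eq tame_Ψ ?_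
  rw [realFourier_convolution tame_dilate.integrable tame_Ψ.integrable]
  ext ξ
  rw [Pi.mul_apply, realFourier_massDilation two_pos, realFourier_coe]
  rcases le_or_gt 1 ‖ξ‖ with hξ | hξ
  · rw [IsLowPiece.ft_eq_zero hψ hΨ hξ, mul_zero]
  · rw [IsLowPiece.ft_eq_one hψ hΨ, one_mul]
    rw [norm_smul, norm_inv, Real.norm_ofNat]
    linarith

theorem IsLowPiece.integral_eq_one (hψ : IsLPF n ψ₀) (hΨ : IsLowPiece ψ₀ Ψ) : ∫ x, Ψ x = 1 := by
  have h := realFourier_zero_right Ψ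
  rw [realFourier_coe, IsLowPiece.ft_eq_one hψ hΨ (by simp)] at h
  exact_mod_cast h.symm

theorem IsLPF.integral_eq_zero (hψ : IsLPF n ψ₀) : ∫ x, ψ₀ x = 0 := by
  have h := realFourier_zero_right ψ₀
  rw [realFourier_coe, hψ.ft_eq_zero (Or.inl (by simp))] at h
  exact_mod_cast h.symm

theorem IsLowPiece.massDilation_two_pow_convolution (hψ : IsLPF n ψ₀) (hΨ : IsLowPiece ψ₀ Ψ)
    (hf : IsTame f) (N : ℕ) :
    massDilation (2 ^ N) Ψ ⋆ f = Ψ ⋆ f + ∑ j ∈ Finset.range N, lpProj ψ₀ j f := by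
  induction N with
  | zero => rw [pow_zero, massDilation_one, Finset.sum_range_zero, add_zero]
  | succ N ih =>
    have h_ne : (2 : ℝ) ^ N ≠ 0 := by positivity
    rw [pow_succ, ← massDilation_massDilation, IsLowPiece.massDilation_two hψ hΨ, massDilation_add,
      ((IsTame.of_schwartz Ψ).massDilation h_ne).add_convolution
        ((IsTame.of_schwartz ψ₀).massDilation h_ne) hf, ih, ← lpProj_natCast_eq_convolution,
      Finset.sum_range_succ, add_assoc]

theorem IsTame.lpProj (hf : IsTame f) (ψ₀ : SchwartzMap (Rn n) ℝ) (j : ℕ) :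
    IsTame (lpProj ψ₀ j f) := by
  rw [lpProj_natCast_eq_convolution]
  exact ((IsTame.of_schwartz ψ₀).massDilation (by positivity)).convolution hf

theorem IsLowPiece.eLpNorm_le_add_tsum (hψ : IsLPF n ψ₀) (hΨ : IsLowPiece ψ₀ Ψ) (hf : IsTame f)
    {p : ℝ≥0∞} (hp : 1 ≤ p) :
    eLpNorm f p volume ≤
      eLpNorm (Ψ ⋆ f) p volume + ∑' j : ℕ, eLpNorm (lpProj ψ₀ j f) p volume := by
  have tame_Ψ := IsTame.of_schwartz Ψ
  have h_lim (x : Rn n) :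
      Tendsto (fun N : ℕ => (massDilation (2 ^ N) Ψ ⋆ f) x) atTop (nhds (f x)) := by
    have h := tendsto_massDilation_convolution Ψ.integrable hf
      (tendsto_pow_atTop_atTop_of_one_lt (one_lt_two (α := ℝ))) x
    rwa [IsLowPiece.integral_eq_one hψ hΨ, one_mul] at h
  refine (Lp.eLpNorm_lim_le_liminf_eLpNorm (fun N : ℕ =>
    ((tame_Ψ.massDilation (by positivity : (2 : ℝ) ^ N ≠ 0)).convolution
      hf).measurable.aestronglyMeasurable) f (ae_of_all _ h_lim)).trans ?_
  refine liminf_le_of_frequently_le' (Frequently.of_forall fun N => ?_)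
  have meas_proj (j : ℕ) : AEStronglyMeasurable (_root_.lpProj ψ₀ j f) volume :=
    (hf.lpProj ψ₀ j).measurable.aestronglyMeasurable
  rw [IsLowPiece.massDilation_two_pow_convolution hψ hΨ hf]
  calc eLpNorm (Ψ ⋆ f + ∑ j ∈ Finset.range N, lpProj ψ₀ j f) p volume
    _ ≤ eLpNorm (Ψ ⋆ f) p volume + ∑ j ∈ Finset.range N, eLpNorm (lpProj ψ₀ j f) p volume :=
        (eLpNorm_add_le (tame_Ψ.convolution hf).measurable.aestronglyMeasurable
          (Finset.aestronglyMeasurable_sum _ fun j _ => meas_proj j) hp).trans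
          (add_le_add le_rfl (eLpNorm_sum_le (fun j _ => meas_proj j) hp))
    _ ≤ _ := add_le_add le_rfl (ENNReal.sum_le_tsum _)

/-- The sum `ψ₋₁ + ψ₀ + ψ₁` of three neighbouring Littlewood–Paley kernels. Its Fourier transform
is `1` on the support of `ψ̂₀`, so that it reproduces `ψ₀` under convolution. -/
def fattenedKernel (ψ₀ : SchwartzMap (Rn n) ℝ) : Rn n → ℝ :=
  massDilation 2⁻¹ ψ₀ + ⇑ψ₀ + massDilation 2 ψ₀

theorem isTame_fattenedKernel (ψ₀ : SchwartzMap (Rn n) ℝ) : IsTame (fattenedKernel ψ₀) :=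
  (((IsTame.of_schwartz ψ₀).massDilation (by norm_num)).add (IsTame.of_schwartz ψ₀)).add
    ((IsTame.of_schwartz ψ₀).massDilation two_ne_zero)

theorem IsLPF.fattenedKernel_neg (hψ : IsLPF n ψ₀) (x : Rn n) :
    fattenedKernel ψ₀ (-x) = fattenedKernel ψ₀ x := by
  simp only [fattenedKernel, massDilation, Pi.add_apply, smul_neg, hψ.even]

theorem IsLPF.integral_fattenedKernel (hψ : IsLPF n ψ₀) : ∫ x, fattenedKernel ψ₀ x = 0 := by
  have tame_ψ₀ := IsTame.of_schwartz ψ₀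
  have int_half := (tame_ψ₀.massDilation (by norm_num : (2 : ℝ)⁻¹ ≠ 0)).integrable
  simp only [fattenedKernel]
  rw [integral_add' (int_half.add ψ₀.integrable) (tame_ψ₀.massDilation two_ne_zero).integrable,
    integral_add' int_half ψ₀.integrable, integral_massDilation (by norm_num),
    integral_massDilation two_pos, hψ.integral_eq_zero, add_zero, add_zero]

theorem integrable_norm_sq_mul_massDilation (ψ₀ : SchwartzMap (Rn n) ℝ) {c : ℝ} (hc : c ≠ 0) :
    Integrable fun x => ‖x‖ ^ 2 * massDilation c ψ₀ x := by
  have h_moment : Integrable fun x : Rn n => ‖x‖ ^ 2 * ψ₀ x := by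
    refine (ψ₀.integrable_pow_mul volume 2).mono'
      ((by fun_prop : Continuous fun x : Rn n => ‖x‖ ^ 2 * ψ₀ x).aestronglyMeasurable)
      (ae_of_all _ fun x => ?_)
    rw [norm_mul, norm_pow, norm_norm]
  refine ((h_moment.comp_smul hc).const_mul (c ^ Module.finrank ℝ (Rn n) * (c ^ 2)⁻¹)).congr
    (ae_of_all _ fun x => ?_)
  simp only [massDilation, norm_smul, mul_pow, Real.norm_eq_abs, sq_abs]
  field_simp

theorem integrable_norm_sq_mul_fattenedKernel (ψ₀ : SchwartzMap (Rn n) ℝ) :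
    Integrable fun x => ‖x‖ ^ 2 * fattenedKernel ψ₀ x := by
  have h_one := integrable_norm_sq_mul_massDilation ψ₀ one_ne_zero
  rw [massDilation_one] at h_one
  simp only [fattenedKernel, Pi.add_apply, mul_add]
  exact ((integrable_norm_sq_mul_massDilation ψ₀ (by norm_num)).add h_one).add
    (integrable_norm_sq_mul_massDilation ψ₀ two_ne_zero)

theorem realFourier_fattenedKernel (ψ₀ : SchwartzMap (Rn n) ℝ) (ξ : Rn n) :
    realFourier (fattenedKernel ψ₀) ξ =
      ftC ψ₀ ((2 : ℝ) • ξ) + ftC ψ₀ ξ + ftC ψ₀ ((2 : ℝ)⁻¹ • ξ) := by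
  have tame_ψ₀ := IsTame.of_schwartz ψ₀
  have tame_half := tame_ψ₀.massDilation (by norm_num : (2 : ℝ)⁻¹ ≠ 0)
  rw [fattenedKernel, realFourier_add (tame_half.add tame_ψ₀).integrable
    (tame_ψ₀.massDilation two_ne_zero).integrable,
    realFourier_add tame_half.integrable tame_ψ₀.integrable, Pi.add_apply, Pi.add_apply,
    realFourier_massDilation (by norm_num), realFourier_massDilation two_pos, inv_inv,
    realFourier_coe]

theorem IsLowPiece.fattenedKernel_convolution (hψ : IsLPF n ψ₀) (hΨ : IsLowPiece ψ₀ Ψ) :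
    fattenedKernel ψ₀ ⋆ ψ₀ = ⇑ψ₀ := by
  have tame_ψ₀ := IsTame.of_schwartz ψ₀
  have tame_fat := isTame_fattenedKernel ψ₀
  refine (tame_fat.convolution tame_ψ₀).eq_of_realFourier_eq tame_ψ₀ ?_
  rw [realFourier_convolution tame_fat.integrable tame_ψ₀.integrable]
  ext ξ
  rw [Pi.mul_apply, realFourier_coe]
  rcases eq_or_ne (ftC ψ₀ ξ) 0 with h_zero | h_ne
  · rw [h_zero, mul_zero]
  obtain ⟨h_lower, h_upper⟩ := hψ.ft_supp ξ h_ne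
  -- Telescoping the three terms leaves `Ψ̂(ξ / 4) - Ψ̂(2 ξ) = 1 - 0`.
  have at_two := IsLowPiece.ft_inv_two_smul hψ hΨ ((2 : ℝ) • ξ)
  have at_half := IsLowPiece.ft_inv_two_smul hψ hΨ ((2 : ℝ)⁻¹ • ξ)
  have Ψ_two : ftC Ψ ((2 : ℝ) • ξ) = 0 := IsLowPiece.ft_eq_zero hψ hΨ (by
    rw [norm_smul, Real.norm_ofNat]
    linarith)
  have Ψ_quarter : ftC Ψ ((2 : ℝ)⁻¹ • (2 : ℝ)⁻¹ • ξ) = 1 := IsLowPiece.ft_eq_one hψ hΨ (by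
    rw [norm_smul, norm_smul, norm_inv, Real.norm_ofNat]
    linarith)
  rw [inv_smul_smul₀ two_ne_zero, Ψ_two, zero_add] at at_two
  rw [Ψ_quarter, IsLowPiece.ft_inv_two_smul hψ hΨ, at_two] at at_half
  rw [realFourier_fattenedKernel, ← at_half, one_mul]

end LittlewoodPaley

section Smoothing

open Module

variable {E : Type*} [NormedAddCommGroup E] [InnerProductSpace ℝ E] [FiniteDimensional ℝ E]
  [MeasurableSpace E] [BorelSpace E] {K k : E → ℝ} {p₀ p₁ : ℝ≥0∞} {s₀ s₁ θ : ℝ}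

theorem IsTame.exists_eLpNorm_convolution_convolution_le (hK : IsTame K) (hk : IsTame k)
    (hKk : K ⋆ k = k) (hp₀ : 1 ≤ p₀) (hp : p₀ ≤ p₁) :
    ∃ A ≠ ∞, ∀ h f : E → ℝ, IsTame h → IsTame f →
      eLpNorm (k ⋆ h ⋆ f) p₁ volume ≤
        A * (eLpNorm (K ⋆ h) 1 volume * eLpNorm (k ⋆ f) p₀ volume) := by
  obtain ⟨A, hA_top, hA⟩ := hK.exists_eLpNorm_convolution_le hp₀ hp
  refine ⟨A, hA_top, fun h f hh hf => ?_⟩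
  have absorb : K ⋆ k ⋆ h ⋆ f = k ⋆ h ⋆ f := by
    rw [← hK.convolution_assoc hk (hh.convolution hf), hKk]
  have reproduce : K ⋆ (K ⋆ h) ⋆ k ⋆ f = k ⋆ h ⋆ f := by
    rw [hK.convolution_assoc hh (hk.convolution hf), hh.convolution_left_comm hk hf, absorb,
      absorb]
  rw [← reproduce]
  have meas_Kh := (hK.convolution hh).measurable
  have meas_kf := (hk.convolution hf).measurable
  exact (hA _ ((hK.convolution hh).convolution (hk.convolution hf)).measurable).trans
    (mul_le_mul_right (eLpNorm_convolution_le meas_Kh meas_kf hp₀) A)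

theorem exists_eLpNorm_massDilation_convolution_heatKernel_le (hK : IsTame K)
    (hK_even : ∀ x, K (-x) = K x) (hK_mean : ∫ x, K x = 0)
    (hK_moment : Integrable fun x => ‖x‖ ^ 2 * K x) (hk : IsTame k) (hKk : K ⋆ k = k)
    (hp₀ : 1 ≤ p₀) (hp : p₀ ≤ p₁) (hθ₀ : 0 ≤ θ) (hθ₁ : θ ≤ 1)
    (hθ : 2 * θ = s₁ - s₀ + finrank ℝ E / p₀.toReal - finrank ℝ E / p₁.toReal) :
    ∃ A ≠ ∞, ∀ c τ : ℝ, 0 < c → 0 < τ → ∀ f : E → ℝ, IsTame f →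
      ENNReal.ofReal (c ^ s₁) * eLpNorm (massDilation c k ⋆ heatKernel τ ⋆ f) p₁ volume ≤
        A * ENNReal.ofReal (τ ^ (-θ)) *
          (ENNReal.ofReal (c ^ s₀) * eLpNorm (massDilation c k ⋆ f) p₀ volume) := by
  obtain ⟨A, hA_top, hA⟩ := hK.exists_eLpNorm_convolution_convolution_le hk hKk hp₀ hp
  obtain ⟨M, hM_top, hM⟩ :=
    exists_eLpNorm_one_convolution_heatKernel_le hK hK_even hK_mean hK_moment hθ₀ hθ₁
  refine ⟨A * M, ENNReal.mul_ne_top hA_top hM_top, fun c τ hc hτ f hf => ?_⟩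
  set g := dilation c⁻¹ f with hg_def
  have hg : IsTame g := hf.dilation (inv_ne_zero hc.ne')
  have hcτ : 0 < c ^ 2 * τ := by positivity
  have exponents : c ^ s₁ * c ^ (-(finrank ℝ E / p₁.toReal)) * (c ^ 2 * τ) ^ (-θ) =
      τ ^ (-θ) * (c ^ s₀ * c ^ (-(finrank ℝ E / p₀.toReal))) := by
    rw [Real.mul_rpow (by positivity) hτ.le, ← Real.rpow_natCast c 2, ← Real.rpow_mul hc.le,
      ← mul_assoc, ← Real.rpow_add hc, ← Real.rpow_add hc, ← Real.rpow_add hc, mul_comm]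
    congr 2
    push_cast
    linarith
  rw [← dilation_dilation_inv hc.ne' f, ← hg_def, ← massDilation_heatKernel hτ hc,
    massDilation_convolution_dilation hc, massDilation_convolution_dilation hc,
    massDilation_convolution_dilation hc, eLpNorm_dilation hc, eLpNorm_dilation hc]
  calc ENNReal.ofReal (c ^ s₁) * (ENNReal.ofReal (c ^ (-(finrank ℝ E / p₁.toReal))) *
        eLpNorm (k ⋆ heatKernel (c ^ 2 * τ) ⋆ g) p₁ volume)
    _ ≤ ENNReal.ofReal (c ^ s₁) * (ENNReal.ofReal (c ^ (-(finrank ℝ E / p₁.toReal))) *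
        (A * (M * ENNReal.ofReal ((c ^ 2 * τ) ^ (-θ)) * eLpNorm (k ⋆ g) p₀ volume))) := by
          gcongr
          exact (hA _ g (isTame_heatKernel hcτ) hg).trans (by gcongr; exact hM _ hcτ)
    _ = A * M * ENNReal.ofReal
          (c ^ s₁ * c ^ (-(finrank ℝ E / p₁.toReal)) * (c ^ 2 * τ) ^ (-θ)) *
          eLpNorm (k ⋆ g) p₀ volume := by
        rw [ENNReal.ofReal_mul (by positivity), ENNReal.ofReal_mul (by positivity)]
        ring
    _ = _ := by
        rw [exponents, ENNReal.ofReal_mul (by positivity), ENNReal.ofReal_mul (by positivity)]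
        ring

end Smoothing

section Besov

variable {ψ₀ Ψ : SchwartzMap (Rn n) ℝ} {f : Rn n → ℝ} {s s₀ s₁ θ : ℝ} {p p₀ p₁ q : ℝ≥0∞}

/-- The sequence `j ↦ 2 ^ (j s) * ‖Δ_j f‖_p`, whose `ℓ^q` norm is the high-frequency part of the
Besov norm. -/
def besovCoeff (ψ₀ : SchwartzMap (Rn n) ℝ) (s : ℝ) (p : ℝ≥0∞) (f : Rn n → ℝ) (j : ℕ) : ℝ≥0∞ :=
  ENNReal.ofReal (2 ^ (j * s)) * eLpNorm (lpProj ψ₀ j f) p volume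

theorem besovNorm_eq (hq : q ≠ 0) (f : Rn n → ℝ) :
    besovNorm ψ₀ Ψ s p q f =
      eLpNorm (Ψ ⋆ f) p volume + eLpNorm (besovCoeff ψ₀ s p f) q Measure.count := by
  rw [besovNorm]
  congr 1
  split_ifs with hq_top
  · rw [hq_top, eLpNorm_exponent_top, eLpNormEssSup_count]
    rfl
  · rw [eLpNorm_eq_lintegral_rpow_enorm_toReal hq hq_top, lintegral_count]
    rfl

theorem besovNorm_zero (hq : q ≠ 0) : besovNorm ψ₀ Ψ s p q (0 : Rn n → ℝ) = 0 := by
  have h_coeff : besovCoeff ψ₀ s p (0 : Rn n → ℝ) = 0 := by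
    ext j
    rw [besovCoeff, lpProj, convolution_zero, eLpNorm_zero, mul_zero, Pi.zero_apply]
  rw [besovNorm_eq hq, h_coeff, convolution_zero, eLpNorm_zero, eLpNorm_zero, add_zero]

theorem exists_eLpNorm_le_besovNorm (hψ : IsLPF n ψ₀) (hΨ : IsLowPiece ψ₀ Ψ) (hs : 0 < s)
    (hp : 1 ≤ p) (hq : q ≠ 0) :
    ∃ C ≠ ∞, ∀ f : Rn n → ℝ, IsTame f → eLpNorm f p volume ≤ C * besovNorm ψ₀ Ψ s p q f := by
  set r := ENNReal.ofReal (2 ^ (-s))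
  have hr : r < 1 := ENNReal.ofReal_lt_one.2
    (Real.rpow_lt_one_of_one_lt_of_neg one_lt_two (neg_lt_zero.2 hs))
  refine ⟨1 + ∑' j : ℕ, r ^ j, ?_, fun f hf => ?_⟩
  · rw [ENNReal.tsum_geometric]
    exact ENNReal.add_ne_top.2 ⟨ENNReal.one_ne_top,
      ENNReal.inv_ne_top.2 (tsub_pos_of_lt hr).ne'⟩
  have eLpNorm_proj (j : ℕ) : eLpNorm (lpProj ψ₀ j f) p volume = r ^ j * besovCoeff ψ₀ s p f j := by
    have weight : (2 ^ (-s)) ^ j * (2 : ℝ) ^ (j * s) = 1 := by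
      rw [← Real.rpow_mul_natCast zero_le_two, ← Real.rpow_add two_pos]
      ring_nf
      exact Real.rpow_zero 2
    rw [besovCoeff, ← mul_assoc, ← ENNReal.ofReal_pow (by positivity),
      ← ENNReal.ofReal_mul (by positivity), weight, ENNReal.ofReal_one, one_mul]
  rw [besovNorm_eq hq, add_mul, one_mul, ← ENNReal.tsum_mul_right]
  refine (IsLowPiece.eLpNorm_le_add_tsum hψ hΨ hf hp).trans
    (add_le_add le_self_add (ENNReal.tsum_le_tsum fun j => ?_))
  rw [eLpNorm_proj]
  exact mul_le_mul_right ((enorm_le_eLpNorm_count (besovCoeff ψ₀ s p f) j hq).trans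
    le_add_self) _

theorem exists_besovCoeff_heatKernel_convolution_le (hψ : IsLPF n ψ₀) (hΨ : IsLowPiece ψ₀ Ψ)
    (hp₀ : 1 ≤ p₀) (hp : p₀ ≤ p₁) (hθ₀ : 0 ≤ θ) (hθ₁ : θ ≤ 1)
    (hθ : 2 * θ = s₁ - s₀ + n / p₀.toReal - n / p₁.toReal) :
    ∃ A ≠ ∞, ∀ τ : ℝ, 0 < τ → ∀ f : Rn n → ℝ, IsTame f → ∀ j,
      besovCoeff ψ₀ s₁ p₁ (heatKernel τ ⋆ f) j ≤
        A * ENNReal.ofReal (τ ^ (-θ)) * besovCoeff ψ₀ s₀ p₀ f j := by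
  obtain ⟨A, hA_top, hA⟩ := exists_eLpNorm_massDilation_convolution_heatKernel_le
    (isTame_fattenedKernel ψ₀) hψ.fattenedKernel_neg hψ.integral_fattenedKernel
    (integrable_norm_sq_mul_fattenedKernel ψ₀) (.of_schwartz ψ₀)
    (IsLowPiece.fattenedKernel_convolution hψ hΨ) hp₀ hp hθ₀ hθ₁
    (s₀ := s₀) (s₁ := s₁) (by rwa [finrank_euclideanSpace_fin])
  refine ⟨A, hA_top, fun τ hτ f hf j => ?_⟩
  simp only [besovCoeff, lpProj_natCast_eq_convolution, Real.rpow_natCast_mul zero_le_two]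
  exact hA _ τ (by positivity) hτ f hf

theorem exists_eLpNorm_lowPiece_convolution_heatKernel_le (hψ : IsLPF n ψ₀)
    (hΨ : IsLowPiece ψ₀ Ψ) (hp₀ : 1 ≤ p₀) (hp : p₀ ≤ p₁) (hθ₀ : 0 ≤ θ) (T₀ : ℝ) :
    ∃ B ≠ ∞, ∀ τ : ℝ, 0 < τ → τ ≤ T₀ → ∀ f : Rn n → ℝ, IsTame f →
      eLpNorm (Ψ ⋆ heatKernel τ ⋆ f) p₁ volume ≤
        B * ENNReal.ofReal (τ ^ (-θ)) * eLpNorm (Ψ ⋆ f) p₀ volume := by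
  have tame_Ψ := IsTame.of_schwartz Ψ
  have tame_dilate := tame_Ψ.massDilation (two_ne_zero (α := ℝ))
  obtain ⟨A, hA_top, hA⟩ := tame_dilate.exists_eLpNorm_convolution_convolution_le tame_Ψ
    (IsLowPiece.massDilation_two_convolution hψ hΨ) hp₀ hp
  set N := eLpNorm (massDilation 2 Ψ) 1 volume
  have hN_top : N ≠ ∞ := tame_dilate.eLpNorm_ne_top le_rfl
  refine ⟨A * N * ENNReal.ofReal (T₀ ^ θ), by finiteness, fun τ hτ hτT f hf => ?_⟩
  have one_le_weight : 1 ≤ ENNReal.ofReal (T₀ ^ θ) * ENNReal.ofReal (τ ^ (-θ)) := by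
    rw [← ENNReal.ofReal_mul (Real.rpow_nonneg (hτ.le.trans hτT) θ), ENNReal.one_le_ofReal,
      Real.rpow_neg hτ.le, ← div_eq_mul_inv, one_le_div (by positivity)]
    exact Real.rpow_le_rpow hτ.le hτT hθ₀
  have eLpNorm_low : eLpNorm (massDilation 2 Ψ ⋆ heatKernel τ) 1 volume ≤ N := by
    have h := eLpNorm_convolution_le tame_dilate.measurable
      (isTame_heatKernel (E := Rn n) hτ).measurable le_rfl
    rwa [eLpNorm_one_heatKernel hτ, mul_one] at h
  calc eLpNorm (Ψ ⋆ heatKernel τ ⋆ f) p₁ volume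
    _ ≤ A * (N * eLpNorm (Ψ ⋆ f) p₀ volume) :=
        (hA _ f (isTame_heatKernel hτ) hf).trans (by gcongr)
    _ ≤ A * (N * eLpNorm (Ψ ⋆ f) p₀ volume) *
          (ENNReal.ofReal (T₀ ^ θ) * ENNReal.ofReal (τ ^ (-θ))) :=
        le_mul_of_one_le_right' one_le_weight
    _ = _ := by ring

theorem exists_besovNorm_heatKernel_convolution_le (hψ : IsLPF n ψ₀) (hΨ : IsLowPiece ψ₀ Ψ)
    (hp₀ : 1 ≤ p₀) (hp : p₀ ≤ p₁) (hq : q ≠ 0) (hθ₀ : 0 ≤ θ) (hθ₁ : θ ≤ 1)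
    (hθ : 2 * θ = s₁ - s₀ + n / p₀.toReal - n / p₁.toReal) (T₀ : ℝ) :
    ∃ A ≠ ∞, ∀ τ : ℝ, 0 < τ → τ ≤ T₀ → ∀ f : Rn n → ℝ, IsTame f →
      besovNorm ψ₀ Ψ s₁ p₁ q (heatKernel τ ⋆ f) ≤
        A * ENNReal.ofReal (τ ^ (-θ)) * besovNorm ψ₀ Ψ s₀ p₀ q f := by
  obtain ⟨A, hA_top, hA⟩ :=
    exists_besovCoeff_heatKernel_convolution_le (s₀ := s₀) (s₁ := s₁) hψ hΨ hp₀ hp hθ₀ hθ₁ hθ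
  obtain ⟨B, hB_top, hB⟩ :=
    exists_eLpNorm_lowPiece_convolution_heatKernel_le hψ hΨ hp₀ hp hθ₀ T₀
  refine ⟨max B A, (max_lt hB_top.lt_top hA_top.lt_top).ne, fun τ hτ hτT f hf => ?_⟩
  rw [besovNorm_eq hq, besovNorm_eq hq, mul_add]
  refine add_le_add ((hB τ hτ hτT f hf).trans (by gcongr; exact le_max_left ..)) ?_
  refine eLpNorm_le_mul_eLpNorm_of_ae_le_mul'' q Measurable.of_discrete.aestronglyMeasurable
    (ae_of_all _ fun j => ?_)
  exact (hA τ hτ f hf j).trans (by gcongr; exacts [le_max_right .., le_rfl])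

variable {α : Type*} [MeasurableSpace α] {μ : Measure α} {F : α → Rn n → ℝ}

theorem measurable_eLpNorm_convolution {k : Rn n → ℝ} (hk : Measurable k)
    (hF : Measurable (Function.uncurry F)) (p : ℝ≥0∞) :
    Measurable fun a => eLpNorm (k ⋆ F a) p volume :=
  measurable_eLpNorm_of_uncurry
    (measurable_uncurry_convolution (K := fun _ => k) (hk.comp measurable_snd) hF) p

theorem measurable_uncurry_besovCoeff (hF : Measurable (Function.uncurry F)) :
    Measurable (Function.uncurry fun a => besovCoeff ψ₀ s p (F a)) := by
  refine measurable_from_prod_countable_left fun j => ?_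
  simp only [Function.uncurry, besovCoeff, lpProj_natCast_eq_convolution]
  exact (measurable_eLpNorm_convolution
    ((IsTame.of_schwartz ψ₀).massDilation (by positivity)).measurable hF p).const_mul _

theorem measurable_besovNorm (hF : Measurable (Function.uncurry F)) (hq : q ≠ 0) :
    Measurable fun a => besovNorm ψ₀ Ψ s p q (F a) := by
  simp only [besovNorm_eq hq]
  exact (measurable_eLpNorm_convolution Ψ.continuous.measurable hF p).add
    (measurable_eLpNorm_of_uncurry (measurable_uncurry_besovCoeff hF) q)

theorem besovNorm_integral_le [SFinite μ] (hF : Measurable (Function.uncurry F)) (hp₀ : 1 ≤ p₀)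
    (hF_fin : ∫⁻ a, eLpNorm (F a) p₀ volume ∂μ ≠ ∞) (hp : 1 ≤ p) (hq : 1 ≤ q) :
    besovNorm ψ₀ Ψ s p q (fun x => ∫ a, F a x ∂μ) ≤ ∫⁻ a, besovNorm ψ₀ Ψ s p q (F a) ∂μ := by
  have hq_ne : q ≠ 0 := (one_pos.trans_le hq).ne'
  have tame_Ψ := IsTame.of_schwartz Ψ
  have coeff_le (j : ℕ) : besovCoeff ψ₀ s p (fun x => ∫ a, F a x ∂μ) j ≤
      ∫⁻ a, besovCoeff ψ₀ s p (F a) j ∂μ := by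
    simp only [besovCoeff, lpProj_natCast_eq_convolution]
    rw [lintegral_const_mul' _ _ ENNReal.ofReal_ne_top]
    exact mul_le_mul_right (((IsTame.of_schwartz ψ₀).massDilation
      (by positivity)).eLpNorm_convolution_integral_le hF hp₀ hF_fin hp) _
  simp only [besovNorm_eq hq_ne]
  rw [lintegral_add_left (measurable_eLpNorm_convolution tame_Ψ.measurable hF p)]
  refine add_le_add (tame_Ψ.eLpNorm_convolution_integral_le hF hp₀ hF_fin hp) ?_
  calc eLpNorm (besovCoeff ψ₀ s p fun x => ∫ a, F a x ∂μ) q Measure.count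
    _ ≤ eLpNorm (fun j => ∫⁻ a, besovCoeff ψ₀ s p (F a) j ∂μ) q Measure.count :=
        eLpNorm_mono_enorm coeff_le
    _ ≤ ∫⁻ a, eLpNorm (besovCoeff ψ₀ s p (F a)) q Measure.count ∂μ :=
        eLpNorm_lintegral_le (measurable_uncurry_besovCoeff hF) hq

end Besov

section Duhamel

theorem measurable_uncurry_indicator {α X : Type*} [TopologicalSpace α] [MeasurableSpace α]
    [OpensMeasurableSpace α] [TopologicalSpace X] [TopologicalSpace.MetrizableSpace X]
    [SecondCountableTopology X] [MeasurableSpace X] [OpensMeasurableSpace X] {u : α → X → ℝ}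
    {S : Set α} (hS : MeasurableSet S) (hu_space : ∀ t ∈ S, Continuous (u t))
    (hu_time : ∀ x, ContinuousOn (fun t => u t x) S) :
    Measurable (Function.uncurry (S.indicator u)) := by
  classical
  have h_space (t : α) : Continuous (S.indicator u t) := by
    by_cases ht : t ∈ S
    · simpa only [Set.indicator_of_mem ht] using hu_space t ht
    · simpa only [Set.indicator_of_notMem ht] using continuous_zero
  have h_time (x : X) : Measurable fun t => S.indicator u t x := by
    have h_piecewise : (fun t => S.indicator u t x) = S.piecewise (fun t => u t x) 0 := by
      ext t
      by_cases ht : t ∈ S <;> simp [ht]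
    rw [h_piecewise]
    exact (hu_time x).measurable_piecewise continuousOn_const hS
  exact (measurable_uncurry_of_continuous_of_measurable (u := fun x t => S.indicator u t x)
    h_space h_time).comp measurable_swap

theorem measurable_uncurry_heatKernel {E : Type*} [NormedAddCommGroup E] [InnerProductSpace ℝ E]
    [MeasurableSpace E] [BorelSpace E] :
    Measurable (Function.uncurry (heatKernel : ℝ → E → ℝ)) := by
  unfold heatKernel Function.uncurry
  fun_prop

theorem lintegral_const_mul_rpow_rpow_one_div {α : Type*} [MeasurableSpace α] {μ : Measure α}
    {A : ℝ≥0∞} (hA : A ≠ ∞) {σ : ℝ} (hσ : 0 < σ) (F : α → ℝ≥0∞) :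
    (∫⁻ t, (A * F t) ^ σ ∂μ) ^ (1 / σ) = A * (∫⁻ t, F t ^ σ ∂μ) ^ (1 / σ) := by
  simp only [ENNReal.mul_rpow_of_nonneg _ _ hσ.le]
  rw [lintegral_const_mul' _ _ (ENNReal.rpow_ne_top_of_nonneg hσ.le hA),
    ENNReal.mul_rpow_of_nonneg _ _ (by positivity), ← ENNReal.rpow_mul,
    mul_one_div_cancel hσ.ne', ENNReal.rpow_one]

variable {ψ₀ Ψ : SchwartzMap (Rn n) ℝ} {s₀ s₁ θ σ₀ σ₁ : ℝ} {p₀ p₁ q : ℝ≥0∞}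

theorem exists_besovNorm_integral_heatKernel_convolution_le (hψ : IsLPF n ψ₀)
    (hΨ : IsLowPiece ψ₀ Ψ) (hp₀ : 1 ≤ p₀) (hp : p₀ ≤ p₁) (hq : 1 ≤ q) (hθ₀ : 0 ≤ θ) (hθ₁ : θ ≤ 1)
    (hθ : 2 * θ = s₁ - s₀ + n / p₀.toReal - n / p₁.toReal) (T₀ : ℝ) :
    ∃ A ≠ ∞, ∀ w : ℝ → Rn n → ℝ, Measurable (Function.uncurry w) → (∀ s, IsTame (w s)) →
      ∀ t ≤ T₀, ∫⁻ s in Set.Ioo 0 t, eLpNorm (w s) p₀ volume ≠ ∞ →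
        besovNorm ψ₀ Ψ s₁ p₁ q (fun x => ∫ s in Set.Ioo 0 t, (heatKernel (t - s) ⋆ w s) x) ≤
          A * ∫⁻ s, rlKernel θ (t - s) * besovNorm ψ₀ Ψ s₀ p₀ q (w s) := by
  obtain ⟨A, hA_top, hA⟩ := exists_besovNorm_heatKernel_convolution_le (s₀ := s₀) (s₁ := s₁)
    (q := q) hψ hΨ hp₀ hp (one_pos.trans_le hq).ne' hθ₀ hθ₁ hθ T₀
  refine ⟨A, hA_top, fun w hw_meas hw t ht hw_fin => ?_⟩
  have meas_flow : Measurable (Function.uncurry fun s => heatKernel (t - s) ⋆ w s) :=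
    measurable_uncurry_convolution (measurable_uncurry_heatKernel.comp
      ((measurable_const.sub measurable_fst).prodMk measurable_snd)) hw_meas
  have flow_fin : ∫⁻ s in Set.Ioo 0 t, eLpNorm (heatKernel (t - s) ⋆ w s) p₀ volume ≠ ∞ := by
    refine ne_top_of_le_ne_top hw_fin (setLIntegral_mono' measurableSet_Ioo fun s hs => ?_)
    have hts : 0 < t - s := sub_pos.2 hs.2
    refine (eLpNorm_convolution_le (isTame_heatKernel hts).measurable (hw s).measurable
      hp₀).trans_eq ?_
    rw [eLpNorm_one_heatKernel hts, one_mul]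
  calc besovNorm ψ₀ Ψ s₁ p₁ q (fun x => ∫ s in Set.Ioo 0 t, (heatKernel (t - s) ⋆ w s) x)
    _ ≤ ∫⁻ s in Set.Ioo 0 t, besovNorm ψ₀ Ψ s₁ p₁ q (heatKernel (t - s) ⋆ w s) :=
        besovNorm_integral_le meas_flow hp₀ flow_fin (hp₀.trans hp) hq
    _ ≤ ∫⁻ s in Set.Ioo 0 t, A * (rlKernel θ (t - s) * besovNorm ψ₀ Ψ s₀ p₀ q (w s)) := by
        refine setLIntegral_mono' measurableSet_Ioo fun s hs => ?_
        have hts : 0 < t - s := sub_pos.2 hs.2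
        rw [rlKernel, Set.indicator_of_mem (Set.mem_Ioi.2 hts), ← mul_assoc]
        exact hA _ hts ((sub_le_self t hs.1.le).trans ht) _ (hw s)
    _ ≤ ∫⁻ s, A * (rlKernel θ (t - s) * besovNorm ψ₀ Ψ s₀ p₀ q (w s)) :=
        setLIntegral_le_lintegral _ _
    _ = A * ∫⁻ s, rlKernel θ (t - s) * besovNorm ψ₀ Ψ s₀ p₀ q (w s) :=
        lintegral_const_mul' _ _ hA_top

theorem setLIntegral_eLpNorm_ne_top_of_besovNorm_rpow (hψ : IsLPF n ψ₀) (hΨ : IsLowPiece ψ₀ Ψ)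
    (hs₀ : 0 < s₀) (hp₀ : 1 ≤ p₀) (hq : q ≠ 0) (hσ₀ : 1 ≤ σ₀) {w : ℝ → Rn n → ℝ}
    (hw : ∀ s, IsTame (w s)) (hw_fin : ∫⁻ s, besovNorm ψ₀ Ψ s₀ p₀ q (w s) ^ σ₀ ≠ ∞) (t : ℝ) :
    ∫⁻ s in Set.Ioo 0 t, eLpNorm (w s) p₀ volume ≠ ∞ := by
  obtain ⟨C, hC_top, hC⟩ := exists_eLpNorm_le_besovNorm (q := q) hψ hΨ hs₀ hp₀ hq
  have le_one_add_rpow (a : ℝ≥0∞) : a ≤ 1 + a ^ σ₀ := by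
    rcases le_total a 1 with ha | ha
    · exact ha.trans le_self_add
    · exact (ENNReal.le_rpow_self_of_one_le ha hσ₀).trans le_add_self
  refine ne_top_of_le_ne_top ?_ (lintegral_mono fun s =>
    (hC _ (hw s)).trans (mul_le_mul_right (le_one_add_rpow _) C))
  rw [lintegral_const_mul' _ _ hC_top, lintegral_add_left measurable_const, setLIntegral_one,
    Real.volume_Ioo]
  exact ENNReal.mul_ne_top hC_top (ENNReal.add_ne_top.2
    ⟨ENNReal.ofReal_ne_top, ne_top_of_le_ne_top hw_fin (setLIntegral_le_lintegral _ _)⟩)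

theorem exists_lintegral_besovNorm_integral_heatKernel_convolution_le (hψ : IsLPF n ψ₀)
    (hΨ : IsLowPiece ψ₀ Ψ) (hp₀ : 1 ≤ p₀) (hp : p₀ ≤ p₁) (hs₀ : 0 < s₀) (hq : 1 ≤ q)
    (hσ₀ : 1 < σ₀) (hσ₀₁ : σ₀ < σ₁)
    (hσ : 1 / σ₀ - 1 / σ₁ = 1 - (s₁ - s₀ + n / p₀.toReal - n / p₁.toReal) / 2) (T₀ : ℝ) :
    ∃ C : ℝ, 0 < C ∧ ∀ T ≤ T₀, ∀ w : ℝ → Rn n → ℝ, Measurable (Function.uncurry w) →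
      (∀ s, IsTame (w s)) →
      (∫⁻ t in Set.Ioo 0 T, besovNorm ψ₀ Ψ s₁ p₁ q
          (fun x => ∫ s in Set.Ioo 0 t, (heatKernel (t - s) ⋆ w s) x) ^ σ₁) ^ (1 / σ₁) ≤
        ENNReal.ofReal C * (∫⁻ t, besovNorm ψ₀ Ψ s₀ p₀ q (w t) ^ σ₀) ^ (1 / σ₀) := by
  have hσ₀_pos : 0 < σ₀ := one_pos.trans hσ₀
  have hσ₁_pos : 0 < σ₁ := hσ₀_pos.trans hσ₀₁
  have inv_lt : 1 / σ₁ < 1 / σ₀ := one_div_lt_one_div_of_lt hσ₀_pos hσ₀₁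
  have inv_lt_one : 1 / σ₀ < 1 := (div_lt_one hσ₀_pos).2 hσ₀
  have inv_pos : 0 < 1 / σ₁ := one_div_pos.2 hσ₁_pos
  set θ := (s₁ - s₀ + n / p₀.toReal - n / p₁.toReal) / 2 with hθ
  have hq_ne : q ≠ 0 := (one_pos.trans_le hq).ne'
  obtain ⟨A, hA_top, hA⟩ := exists_besovNorm_integral_heatKernel_convolution_le (s₀ := s₀)
    (s₁ := s₁) (θ := θ) hψ hΨ hp₀ hp hq (by linarith) (by linarith) (by linarith) T₀
  obtain ⟨C, hC_pos, hC⟩ := hardy_littlewood_sobolev hσ₀ hσ₀₁ hσ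
  refine ⟨(A.toReal + 1) * C, by positivity, fun T hT w hw_meas hw => ?_⟩
  rcases eq_or_ne (∫⁻ t, besovNorm ψ₀ Ψ s₀ p₀ q (w t) ^ σ₀) ∞ with h_top | h_fin
  · rw [h_top, ENNReal.top_rpow_of_pos (by positivity), ENNReal.mul_top
      (ENNReal.ofReal_pos.2 (by positivity)).ne']
    exact le_top
  have A_le : A ≤ ENNReal.ofReal (A.toReal + 1) := by
    rw [ENNReal.le_ofReal_iff_toReal_le hA_top (by positivity)]
    linarith
  calc _
    _ ≤ (∫⁻ t, (A * ∫⁻ s, rlKernel θ (t - s) * besovNorm ψ₀ Ψ s₀ p₀ q (w s)) ^ σ₁) ^ (1 / σ₁) := by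
        gcongr ?_ ^ _
        refine (setLIntegral_mono' measurableSet_Ioo fun t ht => ?_).trans
          (setLIntegral_le_lintegral _ _)
        gcongr ?_ ^ _
        exact hA w hw_meas hw t (ht.2.le.trans hT)
          (setLIntegral_eLpNorm_ne_top_of_besovNorm_rpow hψ hΨ hs₀ hp₀ hq_ne hσ₀.le hw h_fin t)
    _ = A * (∫⁻ t, (∫⁻ s, rlKernel θ (t - s) * besovNorm ψ₀ Ψ s₀ p₀ q (w s)) ^ σ₁) ^ (1 / σ₁) :=
        lintegral_const_mul_rpow_rpow_one_div hA_top hσ₁_pos _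
    _ ≤ ENNReal.ofReal (A.toReal + 1) *
          (ENNReal.ofReal C * (∫⁻ t, besovNorm ψ₀ Ψ s₀ p₀ q (w t) ^ σ₀) ^ (1 / σ₀)) :=
        mul_le_mul' A_le (hC _ (measurable_besovNorm hw_meas hq_ne))
    _ = _ := by rw [← mul_assoc, ← ENNReal.ofReal_mul (by positivity)]

theorem setIntegral_heatKernel_convolution_indicator (u : ℝ → Rn n → ℝ) {t T : ℝ}
    (ht : t ∈ Set.Ioo 0 T) (x : Rn n) :
    ∫ s in Set.Ioo 0 t, (heatKernel (t - s) ⋆ (Set.Ioo 0 T).indicator u s) x =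
      ∫ s in (0 : ℝ)..t, heatOp n (t - s) (u s) x := by
  rw [intervalIntegral.integral_of_le ht.1.le, ← integral_Ioc_eq_integral_Ioo]
  refine setIntegral_congr_fun measurableSet_Ioc fun s hs => ?_
  simp only [heatOp_eq_convolution,
    Set.indicator_of_mem (show s ∈ Set.Ioo 0 T from ⟨hs.1, hs.2.trans_lt ht.2⟩)]

end Duhamel

/-- At `p = ∞` the term `n / p.toReal` is `n / 0 = 0`, in agreement with the usual convention. -/
theorem besov_duhamel_spacetime_estimate_general {ψ₀ Ψ : SchwartzMap (Rn n) ℝ}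
    (hψ : IsLPF n ψ₀) (hΨ : IsLowPiece ψ₀ Ψ) {p₀ p₁ : ℝ≥0∞} (hp₀ : 1 ≤ p₀) (hp₀₁ : p₀ ≤ p₁)
    {s₀ s₁ : ℝ} (hs₀ : 0 < s₀) {q : ℝ≥0∞} (hq : 1 ≤ q) {σ₀ σ₁ : ℝ} (hσ₀ : 1 < σ₀)
    (hσ₀₁ : σ₀ < σ₁)
    (hσdef : 1 / σ₀ - 1 / σ₁ = 1 - (s₁ - s₀ + n / p₀.toReal - n / p₁.toReal) / 2) (T₀ : ℝ) :
    ∃ C : ℝ, 0 < C ∧ ∀ T ≤ T₀, ∀ u : ℝ → Rn n → ℝ,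
      (∀ t ∈ Set.Ioo 0 T, IsTame (u t)) →
      (∀ x, ContinuousOn (fun t => u t x) (Set.Ioo 0 T)) →
      (∫⁻ t in Set.Ioo 0 T, besovNorm ψ₀ Ψ s₁ p₁ q
          (fun x => ∫ s in (0 : ℝ)..t, heatOp n (t - s) (u s) x) ^ σ₁) ^ (1 / σ₁) ≤
        ENNReal.ofReal C *
          (∫⁻ t in Set.Ioo 0 T, besovNorm ψ₀ Ψ s₀ p₀ q (u t) ^ σ₀) ^ (1 / σ₀) := by
  obtain ⟨C, hC_pos, hC⟩ := exists_lintegral_besovNorm_integral_heatKernel_convolution_le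
    (q := q) hψ hΨ hp₀ hp₀₁ hs₀ hq hσ₀ hσ₀₁ hσdef T₀
  refine ⟨C, hC_pos, fun T hT u hu_tame hu_time => ?_⟩
  set w := (Set.Ioo 0 T).indicator u
  have w_eq {t : ℝ} (ht : t ∈ Set.Ioo 0 T) : w t = u t := Set.indicator_of_mem ht u
  have w_eq_zero {t : ℝ} (ht : t ∉ Set.Ioo 0 T) : w t = 0 := Set.indicator_of_notMem ht u
  have w_meas : Measurable (Function.uncurry w) :=
    measurable_uncurry_indicator measurableSet_Ioo (fun t ht => (hu_tame t ht).continuous) hu_time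
  have w_tame (t : ℝ) : IsTame (w t) := by
    by_cases ht : t ∈ Set.Ioo 0 T
    · exact w_eq ht ▸ hu_tame t ht
    · exact w_eq_zero ht ▸ IsTame.zero
  have duhamel_eq {t : ℝ} (ht : t ∈ Set.Ioo 0 T) :
      (fun x => ∫ s in Set.Ioo 0 t, (heatKernel (t - s) ⋆ w s) x) =
        fun x => ∫ s in (0 : ℝ)..t, heatOp n (t - s) (u s) x :=
    funext (setIntegral_heatKernel_convolution_indicator u ht)
  have source_eq : ∫⁻ t, besovNorm ψ₀ Ψ s₀ p₀ q (w t) ^ σ₀ =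
      ∫⁻ t in Set.Ioo 0 T, besovNorm ψ₀ Ψ s₀ p₀ q (u t) ^ σ₀ := by
    rw [← lintegral_indicator measurableSet_Ioo]
    refine lintegral_congr fun t => ?_
    by_cases ht : t ∈ Set.Ioo 0 T
    · rw [w_eq ht, Set.indicator_of_mem ht]
    · rw [w_eq_zero ht, Set.indicator_of_notMem ht, besovNorm_zero (one_pos.trans_le hq).ne',
        ENNReal.zero_rpow_of_pos (one_pos.trans hσ₀)]
  have estimate := hC T hT w w_meas w_tame
  rwa [source_eq, setLIntegral_congr_fun measurableSet_Ioo fun t ht => by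
    rw [duhamel_eq ht]] at estimate

/-- Space–time estimate for the Duhamel operator: with
`1/σ₀ − 1/σ₁ = 1 − (s₁ − s₀ + n/p₀ − n/p₁)/2`, `0 < s₁ − s₀ + n/p₀ − n/p₁ < 2`,
`(∫₀ᵀ ‖∫₀ᵗ e^{(t−s)Δ}u(s) ds‖^{σ₁}_{B^{s₁}_{p₁,q}} dt)^{1/σ₁}
  ≤ C (∫₀ᵀ ‖u(t)‖^{σ₀}_{B^{s₀}_{p₀,q}} dt)^{1/σ₀}`. -/
theorem besov_duhamel_spacetime_estimate
    (n : ℕ) (hn : 1 ≤ n) (ψ₀ Ψ : SchwartzMap (Rn n) ℝ)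
    (hψ : IsLPF n ψ₀) (hΨ : IsLowPiece ψ₀ Ψ)
    (p₀ p₁ : ℝ≥0∞) (hp₀ : 1 ≤ p₀) (hp₀₁ : p₀ ≤ p₁) (hp₁ : p₁ < ∞)
    (s₀ s₁ : ℝ) (hs₀ : 0 < s₀) (hs₀₁ : s₀ ≤ s₁)
    (q : ℝ≥0∞) (hq : 1 ≤ q) (hq' : q < ∞)
    (σ₀ σ₁ : ℝ) (hσ₀ : 1 < σ₀) (hσ₀₁ : σ₀ < σ₁)
    (hD0 : 0 < s₁ - s₀ + (n:ℝ)/p₀.toReal - (n:ℝ)/p₁.toReal)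
    (hD2 : s₁ - s₀ + (n:ℝ)/p₀.toReal - (n:ℝ)/p₁.toReal < 2)
    (hσdef : 1/σ₀ - 1/σ₁ = 1 - (s₁ - s₀ + (n:ℝ)/p₀.toReal - (n:ℝ)/p₁.toReal)/2) :
    ∃ C : ℝ, 0 < C ∧ ∀ T : ℝ, 0 < T → T ≤ 1 → ∀ u : ℝ → Rn n → ℝ,
      (∀ t ∈ Set.Ioo (0:ℝ) T, ∃ U : SchwartzMap (Rn n) ℝ, ∀ x, U x = u t x) →
      (∀ x : Rn n, ContinuousOn (fun t => u t x) (Set.Ioo (0:ℝ) T)) →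
      (∫⁻ t in Set.Ioo (0:ℝ) T,
          (besovNorm ψ₀ Ψ s₁ p₁ q
            (fun x => ∫ s in (0:ℝ)..t, heatOp n (t - s) (u s) x)) ^ σ₁) ^ (1/σ₁)
        ≤ ENNReal.ofReal C *
          (∫⁻ t in Set.Ioo (0:ℝ) T, (besovNorm ψ₀ Ψ s₀ p₀ q (u t)) ^ σ₀) ^ (1/σ₀) := by
  obtain ⟨C, hC_pos, hC⟩ :=
    besov_duhamel_spacetime_estimate_general hψ hΨ hp₀ hp₀₁ hs₀ hq hσ₀ hσ₀₁ hσdef 1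
  refine ⟨C, hC_pos, fun T _ hT u hu => hC T hT u fun t ht => ?_⟩
  obtain ⟨U, hU⟩ := hu t ht
  exact funext hU ▸ IsTame.of_schwartz U
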